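/- arXiv:1409.0800 — 12 statements merged into one kernel-verified Lean document; each statement's English description precedes it below -/
import Mathlib

section
/- For every prime p, the left factorial satisfies !p ≡ Σ_{i=0}^{p-1} (-1)^i · (p-1)!/i! (mod p), where each quotient (p-1)!/i! is an integer (the product (i+1)(i+2)⋯(p-1)). -/
/-!
Reflect the sum by `i = p - 1 - k`. Modulo `p`, the product `(p - k) ⋯ (p - 1)` of the last `k`
residues is `(-1) ^ k * k!` (`prod_Ico_sub_cast`), so the `k`-th term becomes
`(-1) ^ (p - 1 - k) * (-1) ^ k * k! = (-1) ^ (p - 1) * k!`, and `(-1) ^ (p - 1) = 1` by Fermat's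
little theorem (which also covers `p = 2`).
-/

/-- The left factorial `!n = 0! + 1! + ⋯ + (n-1)!`. -/
def leftFactorial (n : ℕ) : ℕ := ∑ i ∈ Finset.range n, Nat.factorial i

theorem prod_Ico_sub_cast (p k : ℕ) (hk : k ≤ p) :
    ∏ j ∈ Finset.Ico (p - k) p, (j : ZMod p) = (-1) ^ k * (k.factorial : ZMod p) := by
  induction k with
  | zero => simp
  | succ k ih =>
    have hstep : p - (k + 1) + 1 = p - k := by omega
    rw [Finset.prod_eq_prod_Ico_succ_bot (by omega), hstep, ih (by omega), Nat.cast_sub hk,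
      Nat.factorial_succ]
    push_cast
    rw [CharP.cast_eq_zero]
    ring

/-- For every prime `p`,
`!p ≡ Σ_{i=0}^{p-1} (-1)^i * (p-1)!/i!  (mod p)`, where the integer quotient
`(p-1)!/i!` is the product `(i+1)(i+2)⋯(p-1) = ∏_{j=i+1}^{p-1} j`. -/
theorem leftFactorial_congr_sum (p : ℕ) (hp : p.Prime) :
    (leftFactorial p : ℤ) ≡
      ∑ i ∈ Finset.range p, (-1) ^ i * ∏ j ∈ Finset.Ico (i + 1) p, (j : ℤ) [ZMOD p] := by
  have : Fact p.Prime := ⟨hp⟩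
  rw [← ZMod.intCast_eq_intCast_iff, ← Finset.sum_range_reflect]
  unfold leftFactorial
  push_cast
  refine Finset.sum_congr rfl fun k hk => ?_
  have hk : k < p := Finset.mem_range.mp hk
  have hstart : p - 1 - k + 1 = p - k := by omega
  have hexp : p - 1 - k + k = p - 1 := by omega
  rw [hstart, prod_Ico_sub_cast p k hk.le, ← mul_assoc, ← pow_add, hexp,
    ZMod.pow_card_sub_one_eq_one (neg_ne_zero.mpr one_ne_zero), one_mul]
end

section
/- For every odd prime p, the left factorial satisfies !p ≡ ⌊(p-1)!/e⌋ + 1 (mod p), where e is Euler's number and ⌊·⌋ denotes the floor of a real number. -/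
open Finset Filter Topology

theorem numDerangements_eq_factorial_mul_sum (n : ℕ) :
    (numDerangements n : ℝ) =
      n.factorial * ∑ k ∈ range (n + 1), (-1 : ℝ) ^ k * (1 / (k.factorial : ℝ)) := by
  induction n with
  | zero => simp
  | succ n ih =>
    have h : (numDerangements (n + 1) : ℝ) = (n + 1) * (numDerangements n : ℝ) - (-1) ^ n := by
      exact_mod_cast numDerangements_succ n
    have hf : ((n + 1).factorial : ℝ) ≠ 0 := by positivity
    rw [sum_range_succ, mul_add, h, ih, mul_left_comm _ ((-1 : ℝ) ^ (n + 1)),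
      mul_one_div_cancel hf, Nat.factorial_succ]
    push_cast
    ring

theorem tendsto_alternating_sum_exp_neg_one :
    Tendsto (fun n ↦ ∑ k ∈ range n, (-1 : ℝ) ^ k * (1 / (k.factorial : ℝ))) atTop
      (𝓝 (Real.exp (-1))) := by
  rw [Real.exp_eq_exp_ℝ]
  simpa [div_eq_mul_inv] using
    (NormedSpace.expSeries_div_hasSum_exp (-1 : ℝ)).tendsto_sum_nat

theorem floor_factorial_div_exp {n : ℕ} (hn : Even n) :
    ⌊(n.factorial : ℝ) / Real.exp 1⌋ + 1 = (numDerangements n : ℤ) := by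
  obtain ⟨j, rfl⟩ := hn.exists_two_nsmul
  simp only [smul_eq_mul]
  have hanti : Antitone fun k : ℕ ↦ 1 / (k.factorial : ℝ) := fun a b hab ↦
    one_div_le_one_div_of_le (by positivity) (by exact_mod_cast Nat.factorial_le hab)
  have hlow := hanti.alternating_series_le_tendsto tendsto_alternating_sum_exp_neg_one j
  -- Two terms further than the sum defining `D_n`, which makes the upper bound strict.
  have hupp := hanti.tendsto_le_alternating_series tendsto_alternating_sum_exp_neg_one (j + 1)
  have hD := numDerangements_eq_factorial_mul_sum (2 * j)
  have hpos : (0 : ℝ) < (2 * j).factorial := by positivity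
  have hlt : 1 / ((2 * j + 2).factorial : ℝ) < 1 / ((2 * j + 1).factorial : ℝ) :=
    one_div_lt_one_div_of_lt (by positivity)
      (by exact_mod_cast (Nat.factorial_lt (by omega)).2 (by omega))
  rw [show 2 * (j + 1) + 1 = 2 * j + 1 + 1 + 1 by ring, sum_range_succ, sum_range_succ] at hupp
  have he : Even (2 * j) := even_two_mul j
  simp only [pow_succ, he.neg_one_pow] at hupp
  have hstrict := mul_lt_mul_of_pos_left (show Real.exp (-1) <
    ∑ k ∈ range (2 * j + 1), (-1 : ℝ) ^ k * (1 / (k.factorial : ℝ)) by linarith) hpos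
  rw [← hD] at hstrict
  have hweak := mul_le_mul_of_nonneg_left hlow hpos.le
  rw [sum_range_succ, he.neg_one_pow, one_mul, mul_add, mul_one_div_cancel hpos.ne'] at hD
  rw [div_eq_mul_inv, ← Real.exp_neg, ← eq_sub_iff_add_eq, Int.floor_eq_iff]
  push_cast
  constructor <;> linarith

/-- Wilson-type reflection: if `k + m + 1` vanishes in `R`, then
`(k+1)(k+2)⋯(k+m) = (-m)⋯(-1)` there. -/
theorem ascFactorial_eq_neg_one_pow_mul {R : Type*} [CommRing R] (m : ℕ) :
    ∀ k : ℕ, ((k : R) + m + 1 = 0) →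
      ((k + 1).ascFactorial m : R) = (-1) ^ m * (m.factorial : R) := by
  induction m with
  | zero => simp
  | succ m ih =>
    intro k hk
    push_cast at hk
    have h := ih (k + 1) (by push_cast; linear_combination hk)
    rw [Nat.ascFactorial_succ, ← Nat.succ_ascFactorial, Nat.factorial_succ]
    push_cast
    rw [Nat.succ_eq_add_one, h]
    linear_combination (-1) ^ m * (m.factorial : R) * hk

theorem leftFactorial_congr_numDerangements {n : ℕ} (hn : Even n) :
    (leftFactorial (n + 1) : ℤ) ≡ numDerangements n [ZMOD ((n + 1 : ℕ) : ℤ)] := by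
  rw [← ZMod.intCast_eq_intCast_iff, numDerangements_sum, leftFactorial, ← sum_range_reflect]
  push_cast
  refine sum_congr rfl fun k hk ↦ ?_
  have hkn : k ≤ n := mem_range_succ_iff.mp hk
  have hz : ((k : ZMod (n + 1)) + (n - k : ℕ) + 1 = 0) := by
    have := ZMod.natCast_self (n + 1)
    rw [← Nat.cast_add, Nat.add_sub_cancel' hkn]
    exact_mod_cast this
  rw [ascFactorial_eq_neg_one_pow_mul _ _ hz, ← mul_assoc, ← pow_add, Nat.add_sub_cancel' hkn,
    hn.neg_one_pow, one_mul]

/-- For every odd prime `p`, `!p ≡ ⌊(p-1)!/e⌋ + 1 (mod p)`. -/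
theorem leftFactorial_congr_floor (p : ℕ) (hp : p.Prime) (hodd : Odd p) :
    (leftFactorial p : ℤ) ≡
      ⌊((Nat.factorial (p - 1) : ℝ)) / Real.exp 1⌋ + 1 [ZMOD p] := by
  obtain ⟨j, rfl⟩ := hodd
  rw [Nat.add_sub_cancel, floor_factorial_div_exp (even_two_mul j)]
  exact leftFactorial_congr_numDerangements (even_two_mul j)
end

section
/- Let p be an odd prime and define the sequence A_i by A_1 = 0 and A_i = (1 - i·A_{i-1}) mod p for i > 1. Then A_{p-1} = !p mod p. -/
/-- Descending through the recurrence `k` times from index `p - 1 = m + 1`, in `ZMod p`. -/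
lemma unfold_top (m : ℕ) (A : ℕ → ℤ)
    (hArec : ∀ i : ℕ, 1 < i → A i = (1 - (i : ℤ) * A (i - 1)) % ((m + 2 : ℕ) : ℤ))
    (k : ℕ) (hk : k ≤ m) :
    (A (m + 1) : ZMod (m + 2)) =
      ∑ j ∈ Finset.range k, (j.factorial : ZMod (m + 2)) + k.factorial * A (m + 1 - k) := by
  induction k with
  | zero => simp
  | succ k ih =>
    obtain ⟨d, rfl⟩ := Nat.exists_eq_add_of_le hk
    have e1 : k + 1 + d + 1 - k = d + 2 := by omega
    have e2 : k + 1 + d + 1 - (k + 1) = d + 1 := by omega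
    have step : (A (d + 2) : ZMod (k + 1 + d + 2)) =
        1 - ((d : ZMod (k + 1 + d + 2)) + 2) * A (d + 1) := by
      rw [hArec (d + 2) (by omega), ZMod.intCast_mod]
      push_cast
      rfl
    have hz : ((k + 1 + d + 2 : ℕ) : ZMod (k + 1 + d + 2)) = 0 := ZMod.natCast_self _
    push_cast at hz
    rw [ih (by omega), e1, e2, step, Finset.sum_range_succ, Nat.factorial_succ]
    push_cast
    linear_combination (-(k.factorial : ZMod (k + 1 + d + 2)) * A (d + 1)) * hz

/-- Let `p` be an odd prime and define `A_1 = 0`, `A_i = (1 - i·A_{i-1}) mod p` for `i > 1`.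
Then `A_{p-1} = !p mod p`. -/
theorem recurrence_A (p : ℕ) (hp : p.Prime) (hodd : Odd p) (A : ℕ → ℤ)
    (hA1 : A 1 = 0)
    (hArec : ∀ i : ℕ, 1 < i → A i = (1 - (i : ℤ) * A (i - 1)) % (p : ℤ)) :
    A (p - 1) = (leftFactorial p : ℤ) % (p : ℤ) := by
  obtain ⟨m, rfl⟩ : ∃ m, p = m + 2 := ⟨p - 2, by have := hp.two_le; omega⟩
  have hm : m ≠ 0 := by
    rintro rfl
    exact absurd hodd (by decide)
  have hz : ((m + 2 : ℕ) : ZMod (m + 2)) = 0 := ZMod.natCast_self _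
  push_cast at hz
  have key : (A (m + 1) : ZMod (m + 2)) = ((leftFactorial (m + 2) : ℤ) : ZMod (m + 2)) := by
    rw [unfold_top m A hArec m le_rfl, show m + 1 - m = 1 by omega, hA1, leftFactorial,
      Finset.sum_range_succ, Finset.sum_range_succ, Nat.factorial_succ]
    push_cast
    linear_combination (-(m.factorial : ZMod (m + 2))) * hz
  have hmod := (ZMod.intCast_eq_intCast_iff' _ _ _).1 key
  -- `A (m + 1)` is already reduced, being given by the recurrence since `m + 1 > 1`.
  have hred : A (m + 1) % ((m + 2 : ℕ) : ℤ) = A (m + 1) := by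
    rw [hArec (m + 1) (by omega), Int.emod_emod_of_dvd _ dvd_rfl]
  rw [show m + 2 - 1 = m + 1 by omega, ← hred, hmod]
end

section
/- Let p be an odd prime and define the sequence B_i by B_1 = 0 and B_i = ((-1)^i + i·B_{i-1}) mod p for i > 1. Then B_{p-1} = !p mod p. -/
/-- Modulo `n + 1`, the falling factorial of `n ≡ -1` is a signed factorial. -/
lemma cast_descFactorial_pred (n m : ℕ) (hm : m ≤ n) :
    ((n.descFactorial m : ℕ) : ZMod (n + 1)) = (-1) ^ m * (m.factorial : ZMod (n + 1)) := by
  induction m with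
  | zero => simp
  | succ m ih =>
    have h : ((n : ℕ) : ZMod (n + 1)) = -1 := by
      have := ZMod.natCast_self (n + 1)
      push_cast at this
      exact eq_neg_of_add_eq_zero_left this
    rw [Nat.descFactorial_succ, Nat.cast_mul, ih (by omega), Nat.cast_sub (by omega), h,
      Nat.factorial_succ]
    push_cast
    ring

lemma cast_numDerangements_pred (n : ℕ) (hn : Even n) :
    (numDerangements n : ZMod (n + 1)) = (leftFactorial (n + 1) : ZMod (n + 1)) := by
  have h := congrArg (Int.cast : ℤ → ZMod (n + 1)) (numDerangements_sum n)
  push_cast at h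
  rw [h, leftFactorial, Nat.cast_sum, ← Finset.sum_range_reflect]
  refine Finset.sum_congr rfl fun j hj => ?_
  have hj' : j ≤ n := by simpa [Nat.lt_succ_iff] using hj
  have e : n + 1 - 1 - j = n - j := by omega
  have e2 : n - (n - j) = j := by omega
  have h3 : (n - j + 1).ascFactorial j = n.descFactorial j := by
    have := Nat.add_descFactorial_eq_ascFactorial (n - j) j
    rw [← this]
    congr 1
    omega
  rw [e, e2, h3, cast_descFactorial_pred n j hj', ← mul_assoc, ← pow_add,
    Nat.sub_add_cancel hj', hn.neg_one_pow, one_mul]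

/-- Let `p` be an odd prime and define `B_1 = 0`, `B_i = ((-1)^i + i·B_{i-1}) mod p`
for `i > 1`. Then `B_{p-1} = !p mod p`. -/
theorem recurrence_B (p : ℕ) (hp : p.Prime) (hodd : Odd p) (B : ℕ → ℤ)
    (hB1 : B 1 = 0)
    (hBrec : ∀ i : ℕ, 1 < i → B i = ((-1) ^ i + (i : ℤ) * B (i - 1)) % (p : ℤ)) :
    B (p - 1) = (leftFactorial p : ℤ) % (p : ℤ) := by
  have key : ∀ i : ℕ, (B (i + 1) : ZMod p) = (numDerangements (i + 1) : ZMod p) := by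
    intro i
    induction i with
    | zero => simp [hB1]
    | succ i ih =>
      have h := congrArg (Int.cast : ℤ → ZMod p) (numDerangements_succ (i + 1))
      rw [hBrec (i + 1 + 1) (by omega), ZMod.intCast_mod]
      push_cast at h ⊢
      rw [h, ih]
      ring
  have h2 := hp.two_le
  have h3 : p ≠ 2 := by rintro rfl; exact absurd hodd (by decide)
  obtain ⟨n, rfl⟩ : ∃ n, p = n + 1 + 1 := ⟨p - 2, by omega⟩
  have hn : Even (n + 1) := by
    rcases hodd with ⟨k, hk⟩
    exact ⟨k, by omega⟩
  have hmod : (B (n + 1) : ZMod (n + 1 + 1)) = ((leftFactorial (n + 1 + 1) : ℤ) : ZMod _) := by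
    rw [key n, cast_numDerangements_pred _ hn, Int.cast_natCast]
  have h4 := (ZMod.intCast_eq_intCast_iff' _ _ _).1 hmod
  rw [Nat.add_sub_cancel, ← h4]
  -- since `p - 1 > 1`, the term `B (p - 1)` is given by the recurrence, hence already reduced
  rw [hBrec (n + 1) (by omega), Int.emod_emod]
end

section
/- For every odd prime p, the left factorial satisfies !p ≡ 1 - 2·Σ_{i=1}^{(p-3)/2} i·(p-2i-2)! (mod p). -/
/-- The exact pairing identity for odd arguments `2m+3`. -/
lemma leftFactorial_pair (m : ℕ) :
    (leftFactorial (2 * m + 3) : ℤ) = 1 + ∑ i ∈ Finset.range (m + 1),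
      (((2 * m + 3 : ℕ) : ℤ) - 2 * i) * (Nat.factorial (2 * m + 3 - 2 * i - 2) : ℤ) := by
  induction m with
  | zero => simp [leftFactorial, Finset.sum_range_succ, Nat.factorial]
  | succ m ih =>
    have h : (leftFactorial (2 * (m + 1) + 3) : ℤ)
        = leftFactorial (2 * m + 3) + (2 * m + 5) * (Nat.factorial (2 * m + 3) : ℤ) := by
      rw [show 2 * (m + 1) + 3 = 2 * m + 3 + 1 + 1 by ring]
      unfold leftFactorial
      rw [Finset.sum_range_succ, Finset.sum_range_succ, Nat.factorial_succ (2 * m + 3)]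
      push_cast
      ring
    rw [h, ih, Finset.sum_range_succ' _ (m + 1), add_assoc]
    -- The split-off top term `(2m+5)·(2m+3)!` matches definitionally; the shifted sums remain.
    congr 2
    refine Finset.sum_congr rfl fun i _ => ?_
    rw [show 2 * (m + 1) + 3 - 2 * (i + 1) - 2 = 2 * m + 3 - 2 * i - 2 by omega]
    push_cast
    ring

/-- For every odd prime `p`,
`!p ≡ 1 - 2·Σ_{i=1}^{(p-3)/2} i·(p-2i-2)!  (mod p)`. -/
theorem leftFactorial_congr_pair_sum (p : ℕ) (hp : p.Prime) (hodd : Odd p) :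
    (leftFactorial p : ℤ) ≡
      1 - 2 * ∑ i ∈ Finset.Icc 1 ((p - 3) / 2),
        (i : ℤ) * (Nat.factorial (p - 2 * i - 2) : ℤ) [ZMOD p] := by
  obtain ⟨m, rfl⟩ : ∃ m, p = 2 * m + 3 := by
    obtain ⟨k, rfl⟩ := hodd
    have := hp.two_le
    exact ⟨k - 1, by omega⟩
  rw [leftFactorial_pair, show (2 * m + 3 - 3) / 2 = m by omega]
  -- The summand at `i = 0` is zero, so the sum may start there.
  have hs : ∑ i ∈ Finset.Icc 1 m, (i : ℤ) * (Nat.factorial (2 * m + 3 - 2 * i - 2) : ℤ)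
      = ∑ i ∈ Finset.range (m + 1),
        (i : ℤ) * (Nat.factorial (2 * m + 3 - 2 * i - 2) : ℤ) := by
    refine Finset.sum_subset (fun i hi => ?_) (fun i hi hi' => ?_)
    · simp only [Finset.mem_Icc, Finset.mem_range] at *
      omega
    · simp only [Finset.mem_Icc, Finset.mem_range] at *
      obtain rfl : i = 0 := by omega
      simp
  rw [hs]
  refine (Int.modEq_iff_dvd.2 ⟨∑ i ∈ Finset.range (m + 1),
    (Nat.factorial (2 * m + 3 - 2 * i - 2) : ℤ), ?_⟩).symm
  simp only [sub_mul, Finset.sum_sub_distrib, Finset.mul_sum, mul_assoc]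
  ring
end

section
/- For every odd prime p, the left factorial satisfies !p ≡ 1 - 2·Σ_{i=1}^{(p-3)/2} i·(p-2)!/(2i+1)! (mod p), where each quotient (p-2)!/(2i+1)! is an integer (the product (2i+2)(2i+3)⋯(p-2)). -/
lemma prod_Ico_zmod (p s : ℕ) (hs : s + 1 ≤ p) :
    ∏ j ∈ Finset.Ico (p - 1 - s) (p - 1), (j : ZMod p) = (-1) ^ s * ((s + 1).factorial : ZMod p) := by
  induction s with
  | zero => simp
  | succ s ih =>
    have h1 : p - 1 - (s + 1) + 1 = p - 1 - s := by omega
    rw [Finset.prod_eq_prod_Ico_succ_bot (by omega), h1, ih (by omega)]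
    have h2 : ((p - 1 - (s + 1) : ℕ) : ZMod p) = -((s : ZMod p) + 2) := by
      have h3 : ((p - 1 - (s + 1) + (s + 2) : ℕ) : ZMod p) = 0 := by
        rw [show p - 1 - (s + 1) + (s + 2) = p by omega]
        exact ZMod.natCast_self p
      push_cast at h3
      linear_combination h3
    rw [h2, Nat.factorial_succ (s + 1)]
    push_cast
    ring

lemma sum_factorial_pairs (n : ℕ) :
    ∑ j ∈ Finset.range (2 * n + 1), j.factorial =
      1 + ∑ t ∈ Finset.range n, (2 * t + 3) * (2 * t + 1).factorial := by
  induction n with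
  | zero => simp
  | succ n ih =>
    rw [show 2 * (n + 1) + 1 = 2 * n + 1 + 1 + 1 by ring, Finset.sum_range_succ,
      Finset.sum_range_succ, ih, Finset.sum_range_succ, Nat.factorial_succ (2 * n + 1)]
    ring

/-- For every odd prime `p`,
`!p ≡ 1 - 2·Σ_{i=1}^{(p-3)/2} i·(p-2)!/(2i+1)!  (mod p)`, where the integer quotient
`(p-2)!/(2i+1)!` is the product `(2i+2)(2i+3)⋯(p-2) = ∏_{j=2i+2}^{p-2} j`. -/
theorem leftFactorial_congr_quotient_sum (p : ℕ) (hp : p.Prime) (hodd : Odd p) :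
    (leftFactorial p : ℤ) ≡
      1 - 2 * ∑ i ∈ Finset.Icc 1 ((p - 3) / 2),
        (i : ℤ) * ∏ j ∈ Finset.Ico (2 * i + 2) (p - 1), (j : ℤ) [ZMOD p] := by
  obtain ⟨n, rfl⟩ : ∃ n, p = 2 * n + 3 := by
    obtain ⟨k, hk⟩ := hodd
    have := hp.two_le
    exact ⟨k - 1, by omega⟩
  have hn : (2 * n + 3 - 3) / 2 = n := by omega
  rw [hn, ← ZMod.intCast_eq_intCast_iff]
  have h0 : (2 * (n : ZMod (2 * n + 3)) + 3) = 0 := by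
    exact_mod_cast ZMod.natCast_self (2 * n + 3)
  have hsum : ∑ i ∈ Finset.Icc 1 n,
      (i : ZMod (2 * n + 3)) * ∏ j ∈ Finset.Ico (2 * i + 2) (2 * n + 3 - 1), (j : ZMod (2 * n + 3)) =
      ∑ t ∈ Finset.range n, ((n : ZMod (2 * n + 3)) - t) * ((2 * t + 1).factorial) := by
    refine Finset.sum_nbij' (fun i => n - i) (fun t => n - t) ?_ ?_ ?_ ?_ ?_
    · intro i hi; simp only [Finset.mem_Icc, Finset.mem_range] at *; omega
    · intro i hi; simp only [Finset.mem_Icc, Finset.mem_range] at *; omega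
    · intro i hi; simp only [Finset.mem_Icc] at *; omega
    · intro i hi; simp only [Finset.mem_range] at *; omega
    · intro i hi
      simp only [Finset.mem_Icc] at hi
      have h := prod_Ico_zmod (2 * n + 3) (2 * (n - i)) (by omega)
      rw [show 2 * n + 3 - 1 - 2 * (n - i) = 2 * i + 2 by omega] at h
      rw [h, Nat.cast_sub hi.2, pow_mul]
      simp
  have hpairs := congrArg (Nat.cast (R := ZMod (2 * n + 3))) (sum_factorial_pairs n)
  push_cast at hpairs
  have hterm : ∑ t ∈ Finset.range n, (2 * (t : ZMod (2 * n + 3)) + 3) * ((2 * t + 1).factorial) =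
      -(2 * ∑ t ∈ Finset.range n, ((n : ZMod (2 * n + 3)) - t) * ((2 * t + 1).factorial)) := by
    rw [Finset.mul_sum, ← Finset.sum_neg_distrib]
    refine Finset.sum_congr rfl fun t _ => ?_
    linear_combination ((2 * t + 1).factorial : ZMod (2 * n + 3)) * h0
  have hlast : leftFactorial (2 * n + 3) =
      ∑ j ∈ Finset.range (2 * n + 1), j.factorial + (2 * n + 3) * (2 * n + 1).factorial := by
    rw [leftFactorial, Finset.sum_range_succ, Finset.sum_range_succ, Nat.factorial_succ (2 * n + 1)]
    ring
  rw [hlast]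
  push_cast
  rw [show 2 * n + 3 - 1 = 2 * n + 2 from rfl] at hsum
  rw [hsum]
  linear_combination hpairs + hterm + ((2 * n + 1).factorial : ZMod (2 * n + 3)) * h0
end

section
/- For every integer k ≥ 2, the rational number s_k = Σ_{i=1}^{k} (i/k)·(2k+1)!/(2i+1)! satisfies s_k = (2k-2)(2k+1)·s_{k-1} + 1, and s_1 = 1. -/
/-- `s_k = Σ_{i=1}^{k} (i/k)·(2k+1)!/(2i+1)!`, as a rational number. -/
def s (k : ℕ) : ℚ :=
  ∑ i ∈ Finset.Icc 1 k,
    ((i : ℚ) / (k : ℚ)) * ((Nat.factorial (2 * k + 1) : ℚ) / (Nat.factorial (2 * i + 1) : ℚ))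

/-- For every integer `k ≥ 2`, `s_k = (2k-2)(2k+1)·s_{k-1} + 1`, and `s_1 = 1`. -/
theorem s_recurrence :
    (∀ k : ℕ, 2 ≤ k → s k = (2 * (k : ℚ) - 2) * (2 * (k : ℚ) + 1) * s (k - 1) + 1) ∧
      s 1 = 1 := by
  -- The `i = k` summand is `1`; every other summand of `s k` is the matching summand of
  -- `s (k - 1)` times `((k - 1) / k) * (2k + 1) * (2k) = (2k - 2) * (2k + 1)`.
  constructor
  · intro k hk
    obtain ⟨m, rfl⟩ : ∃ m, k = m + 1 := ⟨k - 1, by omega⟩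
    have hm : (m : ℚ) ≠ 0 := by
      have : m ≠ 0 := by omega
      exact_mod_cast this
    have hm1 : (m : ℚ) + 1 ≠ 0 := by positivity
    have hfac : (Nat.factorial (2 * (m + 1) + 1) : ℚ)
        = (2 * m + 3) * (2 * m + 2) * (Nat.factorial (2 * m + 1) : ℚ) := by
      rw [show 2 * (m + 1) + 1 = (2 * m + 1) + 1 + 1 by ring, Nat.factorial_succ,
        Nat.factorial_succ]
      push_cast
      ring
    have hne : (Nat.factorial (2 * (m + 1) + 1) : ℚ) ≠ 0 := by positivity
    unfold s
    rw [Nat.add_sub_cancel, Finset.sum_Icc_succ_top (by omega), div_self hne, mul_one,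
      div_self (by exact_mod_cast hm1), Finset.mul_sum]
    congr 1
    refine Finset.sum_congr rfl fun i _ => ?_
    rw [hfac]
    push_cast
    field_simp
    ring
  · norm_num [s]
end

section
/- Let p be a prime with p ≥ 5, and define the integer sequence s_i by s_1 = 1 and s_i = (2i-2)(2i+1)·s_{i-1} + 1 for i ≥ 2. Then !p ≡ 1 + 3·s_{(p-3)/2} (mod p). -/
lemma leftFactorial_succ (n : ℕ) :
    leftFactorial (n + 1) = leftFactorial n + n.factorial :=
  Finset.sum_range_succ _ _

/-- The recursion for `s` unrolled `m` times from the index `n`, where `p = 2n + 3`. -/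
lemma unroll_s (n : ℕ) (s : ℕ → ℤ)
    (hsrec : ∀ i : ℕ, 2 ≤ i → s i = (2 * (i : ℤ) - 2) * (2 * (i : ℤ) + 1) * s (i - 1) + 1)
    (m : ℕ) (hm : m + 1 ≤ n) :
    (1 + 3 * s n : ZMod (2 * n + 3)) =
      leftFactorial (2 * m + 1) + (2 * m + 1).factorial * (2 * m + 3) * s (n - m) := by
  induction m with
  | zero => simp [leftFactorial]
  | succ m ih =>
    rw [ih (by omega)]
    obtain ⟨k, rfl⟩ : ∃ k, n = m + k + 2 := ⟨n - m - 2, by omega⟩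
    have e1 : m + k + 2 - m = k + 2 := by omega
    have e2 : m + k + 2 - (m + 1) = k + 1 := by omega
    have hr := hsrec (k + 2) (by omega)
    have hp : ((2 * (m + k + 2) + 3 : ℕ) : ZMod (2 * (m + k + 2) + 3)) = 0 :=
      ZMod.natCast_self _
    rw [e1, e2, hr, show k + 2 - 1 = k + 1 from rfl,
      show 2 * (m + 1) + 1 = 2 * m + 1 + 1 + 1 by ring]
    simp only [leftFactorial_succ, Nat.factorial_succ (2 * m + 1 + 1),
      Nat.factorial_succ (2 * m + 1)]
    push_cast at hp ⊢
    have hk : (2 * k : ZMod (2 * (m + k + 2) + 3)) = -(2 * m + 7) := by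
      linear_combination hp
    have h1 : (2 * (k + 2) - 2 : ZMod (2 * (m + k + 2) + 3)) = -(2 * m + 5) := by
      linear_combination hk
    have h2 : (2 * (k + 2) + 1 : ZMod (2 * (m + k + 2) + 3)) = -(2 * m + 2) := by
      linear_combination hk
    rw [h1, h2]
    ring

/-- Let `p ≥ 5` be a prime and define the integer sequence `s_1 = 1`,
`s_i = (2i-2)(2i+1)·s_{i-1} + 1` for `i ≥ 2`. Then `!p ≡ 1 + 3·s_{(p-3)/2} (mod p)`. -/
theorem leftFactorial_congr_s (p : ℕ) (hp : p.Prime) (hp5 : 5 ≤ p) (s : ℕ → ℤ)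
    (hs1 : s 1 = 1)
    (hsrec : ∀ i : ℕ, 2 ≤ i → s i = (2 * (i : ℤ) - 2) * (2 * (i : ℤ) + 1) * s (i - 1) + 1) :
    (leftFactorial p : ℤ) ≡ 1 + 3 * s ((p - 3) / 2) [ZMOD p] := by
  obtain ⟨k, rfl⟩ : ∃ k, p = 2 * (k + 1) + 3 := by
    obtain ⟨j, hj⟩ := hp.odd_of_ne_two (by omega)
    exact ⟨j - 2, by omega⟩
  rw [show (2 * (k + 1) + 3 - 3) / 2 = k + 1 by omega, ← ZMod.intCast_eq_intCast_iff]
  have h := unroll_s (k + 1) s hsrec k le_rfl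
  have h0 : ((2 * (k + 1) + 3 : ℕ) : ZMod (2 * (k + 1) + 3)) = 0 := ZMod.natCast_self _
  rw [show k + 1 - k = 1 by omega, hs1] at h
  have hL : leftFactorial (2 * (k + 1) + 3) =
      leftFactorial (2 * k + 1) + (2 * k + 1).factorial * (2 * k + 3)
        + (2 * k + 3).factorial * (2 * (k + 1) + 3) := by
    rw [show 2 * (k + 1) + 3 = 2 * k + 1 + 1 + 1 + 1 + 1 by ring]
    simp only [leftFactorial_succ, Nat.factorial_succ]
    ring
  push_cast at h ⊢
  rw [h, hL, Nat.cast_add, Nat.cast_mul _ (2 * (k + 1) + 3), h0]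
  push_cast
  ring
end

section
/- The following are equivalent: (i) for every integer n > 1, gcd(!n, n!) = 2; (ii) no integer n > 2 divides !n; (iii) no odd prime p divides !p. -/
theorem dvd_leftFactorial_iff {d k n : ℕ} (hd : d ∣ k.factorial) (hkn : k ≤ n) :
    d ∣ leftFactorial n ↔ d ∣ leftFactorial k := by
  unfold leftFactorial
  rw [← Finset.sum_range_add_sum_Ico _ hkn]
  refine (Nat.dvd_add_iff_left (Finset.dvd_sum fun i hi => ?_)).symm
  exact hd.trans (Nat.factorial_dvd_factorial (Finset.mem_Ico.mp hi).1)

theorem not_four_dvd_gcd {n : ℕ} (hn : 1 < n) :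
    ¬ 4 ∣ Nat.gcd (leftFactorial n) n.factorial := by
  intro h
  rcases Nat.lt_or_ge n 4 with h4 | h4
  · -- `!3 = 4`, so for `n = 3` the obstruction comes from `3! = 6` instead.
    have h' := h.trans (Nat.gcd_dvd_right _ _)
    interval_cases n <;> revert h' <;> decide
  · have h' := (dvd_leftFactorial_iff (by decide) h4).mp (h.trans (Nat.gcd_dvd_left _ _))
    revert h'
    decide

theorem gcd_eq_two_of_odd_primes
    (H : ∀ p : ℕ, p.Prime → Odd p → ¬ p ∣ leftFactorial p) {n : ℕ} (hn : 1 < n) :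
    Nat.gcd (leftFactorial n) n.factorial = 2 := by
  have h2 : 2 ∣ Nat.gcd (leftFactorial n) n.factorial :=
    Nat.dvd_gcd ((dvd_leftFactorial_iff (k := 2) (by decide) hn).mpr (by decide))
      (Nat.dvd_factorial two_pos hn)
  obtain ⟨m, hm⟩ := h2
  by_contra hne
  obtain ⟨q, hq, hqm⟩ := Nat.exists_prime_and_dvd (n := m) (by omega)
  rcases hq.eq_two_or_odd' with rfl | hodd
  · exact not_four_dvd_gcd hn (hm ▸ Nat.mul_dvd_mul_left 2 hqm)
  · have hqg : q ∣ Nat.gcd (leftFactorial n) n.factorial := hm ▸ hqm.mul_left 2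
    have hqn : q ≤ n := hq.dvd_factorial.mp (hqg.trans (Nat.gcd_dvd_right _ _))
    exact H q hq hodd ((dvd_leftFactorial_iff (Nat.dvd_factorial hq.pos le_rfl) hqn).mp
      (hqg.trans (Nat.gcd_dvd_left _ _)))

/-- The following are equivalent:
(i) for every integer `n > 1`, `gcd(!n, n!) = 2`;
(ii) no integer `n > 2` divides `!n`;
(iii) no odd prime `p` divides `!p`. -/
theorem kurepa_equivalences :
    ((∀ n : ℕ, 1 < n → Nat.gcd (leftFactorial n) (Nat.factorial n) = 2) ↔
        (∀ n : ℕ, 2 < n → ¬ n ∣ leftFactorial n)) ∧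
      ((∀ n : ℕ, 2 < n → ¬ n ∣ leftFactorial n) ↔
        (∀ p : ℕ, p.Prime → Odd p → ¬ p ∣ leftFactorial p)) := by
  have h12 : (∀ n : ℕ, 1 < n → Nat.gcd (leftFactorial n) (Nat.factorial n) = 2) →
      (∀ n : ℕ, 2 < n → ¬ n ∣ leftFactorial n) := by
    intro H n hn hdvd
    have h : n ∣ Nat.gcd (leftFactorial n) n.factorial :=
      Nat.dvd_gcd hdvd (Nat.dvd_factorial (by omega) le_rfl)
    rw [H n (by omega)] at h
    have := Nat.le_of_dvd two_pos h
    omega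
  have h23 : (∀ n : ℕ, 2 < n → ¬ n ∣ leftFactorial n) →
      (∀ p : ℕ, p.Prime → Odd p → ¬ p ∣ leftFactorial p) := by
    intro H p hp hodd
    refine H p (lt_of_le_of_ne hp.two_le ?_)
    rintro rfl
    exact absurd hodd (by decide)
  have h31 : (∀ p : ℕ, p.Prime → Odd p → ¬ p ∣ leftFactorial p) →
      (∀ n : ℕ, 1 < n → Nat.gcd (leftFactorial n) (Nat.factorial n) = 2) :=
    fun H n hn => gcd_eq_two_of_odd_primes H hn
  exact ⟨⟨h12, fun h => h31 (h23 h)⟩, ⟨h23, fun h => h12 (h31 h)⟩⟩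
end

section
/- For a positive integer k, 5 divides !^k 5 = (0!)^k + (1!)^k + (2!)^k + (3!)^k + (4!)^k if and only if k ≡ 0 (mod 4) or k ≡ 3 (mod 4). -/
/-- The generalized left factorial `!^k n = (0!)^k + (1!)^k + ⋯ + ((n-1)!)^k`. -/
def genLeftFactorial (k n : ℕ) : ℕ := ∑ i ∈ Finset.range n, (Nat.factorial i) ^ k

/-- Modulo `5` the terms are `1, 1, 2^k, 6^k, 24^k`, and every base has fourth power `1`
(Fermat), so the residue of the sum depends only on `k % 4`. -/
theorem genLeftFactorial_five_mod_five (k : ℕ) :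
    genLeftFactorial k 5 % 5 = genLeftFactorial (k % 4) 5 % 5 := by
  have key : ∀ a : ℕ, a ^ 4 ≡ 1 [MOD 5] → a ^ k ≡ a ^ (k % 4) [MOD 5] := by
    intro a ha
    have h := ((ha.pow (k / 4)).mul_right (a ^ (k % 4)))
    rwa [← pow_mul, ← pow_add, Nat.div_add_mod, one_pow, one_mul] at h
  simp only [genLeftFactorial, Finset.sum_range_succ, Finset.sum_range_zero]
  change _ ≡ _ [MOD 5]
  gcongr ?_ + ?_ + ?_ + ?_ + ?_ + ?_
  · rfl
  all_goals exact key _ (by decide)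

/-- For a positive integer `k`, `5` divides `!^k 5` iff `k ≡ 0 (mod 4)` or `k ≡ 3 (mod 4)`. -/
theorem five_dvd_genLeftFactorial_iff (k : ℕ) (hk : 0 < k) :
    5 ∣ genLeftFactorial k 5 ↔ k % 4 = 0 ∨ k % 4 = 3 := by
  rw [Nat.dvd_iff_mod_eq_zero, genLeftFactorial_five_mod_five]
  have h : k % 4 < 4 := Nat.mod_lt _ (by norm_num)
  generalize k % 4 = r at h ⊢
  interval_cases r <;> decide
end

section
/- The number p = 6855730873 is prime and p divides 2! + 3! + ⋯ + (p-1)!; equivalently, !p ≡ 2 (mod p). -/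
namespace LeftFact

open Polynomial

/-! ### The computation -/

/-- The prime modulus. -/
abbrev P : ℕ := 6855730873

/-- The `2 ^ l`-digit number in base `2 ^ 128` all of whose digits are `s`; used as a bit mask. -/
noncomputable def rep (s l : ℕ) : ℕ :=
  Nat.rec (motive := fun _ => ℕ) s
    (fun l r => Nat.add r (Nat.shiftLeft r (Nat.mul 128 (Nat.pow 2 l)))) l

/-- The mask used by `red`: `2 ^ l` digits equal to `2 ^ 56 - 1`. -/
noncomputable def mask (l : ℕ) : ℕ := rep 72057594037927935 l

/-- Barrett reduction modulo `P` of all the base `2 ^ 128` digits of `c` at once. The constant is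
`⌊2 ^ 90 / P⌋`, and `m` is a mask. Digits below `2 ^ 87` become digits below `2 ^ 34`. -/
def red (m c : ℕ) : ℕ :=
  Nat.sub c (Nat.mul 6855730873 (Nat.land (Nat.shiftRight
    (Nat.mul 180570104372208234 (Nat.land (Nat.shiftRight c 31) m)) 59) m))

/-- The digits `k, …, k + m - 1` of `N`, moved to the positions `0, …, m - 1`. -/
def slice (k m N : ℕ) : ℕ :=
  Nat.shiftRight (Nat.land N (Nat.sub (Nat.shiftLeft 1 (Nat.mul 128 (Nat.add k m))) 1))
    (Nat.mul 128 k)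

/-- Packed reversed polynomials of `H = ∏_{t < n} (x + b + t + 1)` and
`G = ∑_{k < n} ∏_{t < k} (x + b + t + 1)`, both reversed with respect to degree `n`, where
`n = 2 ^ l` and `b = i * n`. -/
noncomputable def prodH (l : ℕ) : ℕ → ℕ × ℕ :=
  Nat.rec (motive := fun _ => ℕ → ℕ × ℕ)
    (fun i => (Nat.add 1 (Nat.shiftLeft (Nat.mod (Nat.succ i) 6855730873) 128),
      Nat.shiftLeft 1 128))
    (fun l ih i =>
      (fun a b : ℕ × ℕ =>
        (red (mask (Nat.succ (Nat.succ l))) (Nat.mul a.1 b.1),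
         red (mask (Nat.succ (Nat.succ l)))
          (Nat.add (Nat.shiftLeft a.2 (Nat.mul 128 (Nat.pow 2 l))) (Nat.mul a.1 b.2))))
      (ih (Nat.mul 2 i)) (ih (Nat.succ (Nat.mul 2 i)))) l

/-- Binary trees labelled by numbers. -/
inductive QT
  | leaf (q : ℕ)
  | node (q : ℕ) (l r : QT)

/-- The label at the root. -/
noncomputable def QT.q (t : QT) : ℕ :=
  QT.rec (motive := fun _ => ℕ) (fun q => q) (fun q _ _ _ _ => q) t

/-- The left subtree (a leaf is its own subtree). -/
noncomputable def QT.l (t : QT) : QT :=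
  QT.rec (motive := fun _ => QT) (fun q => .leaf q) (fun _ l _ _ _ => l) t

/-- The right subtree (a leaf is its own subtree). -/
noncomputable def QT.r (t : QT) : QT :=
  QT.rec (motive := fun _ => QT) (fun q => .leaf q) (fun _ _ r _ _ => r) t

/-- The subproduct tree of the packed polynomials `∏ (1 - d * j * X)`, the product being over
`i * 2 ^ l ≤ j < (i + 1) * 2 ^ l`. -/
noncomputable def prodQ (d l : ℕ) : ℕ → QT :=
  Nat.rec (motive := fun _ => ℕ → QT)
    (fun i => .leaf (Nat.add 1
      (Nat.shiftLeft (Nat.mod (Nat.mul 6855730872 (Nat.mul d i)) 6855730873) 128)))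
    (fun l ih i =>
      (fun a b : QT => .node (red (mask (Nat.succ (Nat.succ l))) (Nat.mul a.q b.q)) a b)
      (ih (Nat.mul 2 i)) (ih (Nat.succ (Nat.mul 2 i)))) l

/-- `force n k = k n`; evaluating it by weak head reduction evaluates `n` first. -/
noncomputable def force {α : Type} (n : ℕ) (k : ℕ → α) : α :=
  Nat.rec (motive := fun _ => α) (k 0) (fun n _ => k (Nat.succ n)) n

/-- One step down the subproduct tree: multiply the window `t` of `2 ^ (l + 1)` digits by the
polynomial `q` of degree `2 ^ l`, and keep the `2 ^ l` digits that are unaffected by truncation. -/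
noncomputable def win (l t q : ℕ) : ℕ :=
  red (mask l) (slice (Nat.pow 2 l) (Nat.pow 2 l) (Nat.mul t q))

/-- A state `f + s * 2 ^ 64` holds `f = n!` and `s = ∑_{k < n} k!` modulo `P`. A step advances `n`
by the length of a block whose values of `H` and `G` are `h` and `g`. -/
def step (h g st : ℕ) : ℕ :=
  (fun f s => Nat.add (Nat.mod (Nat.mul f h) 6855730873)
    (Nat.shiftLeft (Nat.mod (Nat.add s (Nat.mul f g)) 6855730873) 64))
   (Nat.land st 18446744073709551615) (Nat.shiftRight st 64)

/-- Descend the subproduct tree from left to right, threading the state through the leaves. -/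
noncomputable def eval (l : ℕ) : QT → ℕ → ℕ → ℕ → ℕ :=
  Nat.rec (motive := fun _ => QT → ℕ → ℕ → ℕ → ℕ)
    (fun _ h g st => step h g st)
    (fun l ih t h g st =>
      force (ih t.l (win l h t.r.q) (win l g t.r.q) st) fun st =>
        ih t.r (win l h t.l.q) (win l g t.l.q) st) l

/-- Newton iteration for the inverse of `q` modulo `X ^ (2 ^ l + 1)`. Nothing is proved about this
function: its output is checked by `isInv`. -/
noncomputable def inv (q l : ℕ) : ℕ :=
  Nat.rec (motive := fun _ => ℕ)
    (Nat.add 1 (Nat.shiftLeft (Nat.sub 13711461746 (slice 1 1 q)) 128))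
    (fun l r =>
      (fun n m => red m (slice 0 n (Nat.mul r
         (Nat.add 2 (red m (Nat.sub (Nat.mul 27422923492 (Nat.div m 72057594037927935))
          (red m (slice 0 n (Nat.mul r (slice 0 n q))))))))))
      (Nat.succ (Nat.pow 2 (Nat.succ l))) (mask (Nat.succ (Nat.succ l)))) l

/-- Check that the product of the packed polynomials `q` and `v` is `1` modulo `P` and
`X ^ (2 ^ l + 1)`. As `2 ^ 32 < P < 2 ^ 33`, a reduced digit divisible by `P` is `P` times its
bit number `32`. -/
noncomputable def isInv (q v l : ℕ) : Bool :=
  (fun m => (fun r => Nat.beq r (Nat.add 1 (Nat.mul 6855730873 (Nat.land (Nat.shiftRight r 32) m))))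
    (red m (slice 0 (Nat.succ (Nat.pow 2 l)) (Nat.mul q v)))) (mask (Nat.succ l))

/-- The coefficients `2 ^ a - 2 ^ b + 1, …, 2 ^ a` of `f * v`. -/
noncomputable def top (a b f v : ℕ) : ℕ :=
  red (mask b) (slice (Nat.succ (Nat.sub (Nat.pow 2 a) (Nat.pow 2 b))) (Nat.pow 2 b) (Nat.mul f v))

/-- The whole computation, with blocks of length `2 ^ a` and `2 ^ b` evaluation points: it verifies
`∑_{k < 2 ^ (a + b)} k! ≡ 2` modulo `P`. -/
noncomputable def main (a b : ℕ) : Bool :=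
  (fun f : ℕ × ℕ => fun t : QT =>
    (fun v => and (isInv t.q v a)
      (Nat.beq (Nat.shiftRight (eval b t (top a b f.1 v) (top a b f.2 v) 1) 64) 2))
     (Nat.land (inv t.q a) (rep 17179869183 (Nat.succ a)))) (prodH a 0) (prodQ (Nat.pow 2 a) b 0)

/-! ### Packed polynomials -/

/-- `Enc b n N p`: the number `N` is the value of `p` at `2 ^ 128`, where `p` has at most `n`
coefficients, all of them below `b`. -/
structure Enc (b n N : ℕ) (p : ℕ[X]) : Prop where
  eval : p.eval (2 ^ 128) = N
  lt : ∀ i, p.coeff i < b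
  supp : ∀ i, n ≤ i → p.coeff i = 0

/-- The polynomial `∑_{i < n} c i * X ^ i`. -/
noncomputable def ofFn {R : Type*} [Semiring R] (n : ℕ) (c : ℕ → R) : R[X] :=
  ∑ i ∈ Finset.range n, monomial i (c i)

theorem ofFn_coeff {R : Type*} [Semiring R] (n : ℕ) (c : ℕ → R) (i : ℕ) :
    (ofFn n c).coeff i = if i < n then c i else 0 := by
  simp only [ofFn, finsetSum_coeff, coeff_monomial]
  simp

/-- The base `2 ^ 128` digits of `p.eval (2 ^ 128)` are the coefficients of `p`. -/
theorem testBit_eval (t : ℕ) : ∀ p : ℕ[X], (∀ i, p.coeff i < 2 ^ 128) →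
    (p.eval (2 ^ 128)).testBit t = (p.coeff (t / 128)).testBit (t % 128) := by
  induction t using Nat.strong_induction_on with
  | _ t ih =>
    intro p hp
    have h1 : p.eval (2 ^ 128) = 2 ^ 128 * p.divX.eval (2 ^ 128) + p.coeff 0 := by
      conv_lhs => rw [← p.divX_mul_X_add]
      simp [mul_comm]
    rw [h1, Nat.testBit_two_pow_mul_add _ (hp 0)]
    split_ifs with h
    · rw [Nat.div_eq_of_lt h, Nat.mod_eq_of_lt h]
    · rw [ih (t - 128) (by omega) p.divX (fun i => by rw [coeff_divX]; exact hp _), coeff_divX,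
        show (t - 128) / 128 + 1 = t / 128 by omega, show (t - 128) % 128 = t % 128 by omega]

theorem eval_eq_of_testBit {p : ℕ[X]} {N : ℕ} (hp : ∀ i, p.coeff i < 2 ^ 128)
    (h : ∀ i j, j < 128 → N.testBit (128 * i + j) = (p.coeff i).testBit j) :
    p.eval (2 ^ 128) = N := by
  refine Nat.eq_of_testBit_eq fun t => ?_
  rw [testBit_eval t p hp, ← h _ _ (Nat.mod_lt _ (by norm_num)), Nat.div_add_mod]

namespace Enc

variable {b n N : ℕ} {p : ℕ[X]}

theorem testBit (h : Enc b n N p) (hb : b ≤ 2 ^ 128) (i j : ℕ) (hj : j < 128) :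
    N.testBit (128 * i + j) = (p.coeff i).testBit j := by
  rw [← h.eval, testBit_eval _ p fun i => (h.lt i).trans_le hb]
  congr 2 <;> omega

/-- A packed form determines the polynomial. -/
theorem ext {b' n' : ℕ} {q : ℕ[X]} (h : Enc b n N p) (h' : Enc b' n' N q)
    (hb : b ≤ 2 ^ 128) (hb' : b' ≤ 2 ^ 128) : p = q := by
  ext i
  refine Nat.eq_of_testBit_eq fun j => ?_
  by_cases hj : j < 128
  · rw [← h.testBit hb i j hj, ← h'.testBit hb' i j hj]
  · have h2 : 2 ^ 128 ≤ 2 ^ j := Nat.pow_le_pow_right (by norm_num) (by omega)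
    rw [Nat.testBit_lt_two_pow ((h.lt i).trans_le (hb.trans h2)),
      Nat.testBit_lt_two_pow ((h'.lt i).trans_le (hb'.trans h2))]

theorem mono {b' n' : ℕ} (h : Enc b n N p) (hb : b ≤ b') (hn : n ≤ n') : Enc b' n' N p :=
  ⟨h.eval, fun i => (h.lt i).trans_le hb, fun i hi => h.supp i (hn.trans hi)⟩

theorem add {b' n' N' : ℕ} {q : ℕ[X]} (h : Enc b n N p) (h' : Enc b' n' N' q) :
    Enc (b + b') (max n n') (N + N') (p + q) := by
  refine ⟨by rw [eval_add, h.eval, h'.eval], fun i => ?_, fun i hi => ?_⟩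
  · rw [coeff_add]; exact add_lt_add (h.lt i) (h'.lt i)
  · rw [coeff_add, h.supp i (le_of_max_le_left hi), h'.supp i (le_of_max_le_right hi)]

theorem mul {b' n' N' : ℕ} {q : ℕ[X]} (hn : 0 < n) (h : Enc b n N p) (h' : Enc b' n' N' q) :
    Enc (n * (b * b')) (n + n' - 1) (N * N') (p * q) := by
  refine ⟨by rw [eval_mul, h.eval, h'.eval], fun i => ?_, fun i hi => ?_⟩
  · rw [coeff_mul, Finset.Nat.sum_antidiagonal_eq_sum_range_succ (fun x y => p.coeff x * q.coeff y)]
    have hz : ∀ x, p.coeff x * q.coeff (i - x) < b * b' := fun x =>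
      Nat.mul_lt_mul'' (h.lt x) (h'.lt _)
    calc ∑ x ∈ Finset.range i.succ, p.coeff x * q.coeff (i - x)
        ≤ ∑ x ∈ Finset.range n, p.coeff x * q.coeff (i - x) := by
          refine Finset.sum_le_sum_of_ne_zero fun x _ hx => ?_
          rw [Finset.mem_range]
          by_contra hxn
          exact hx (by rw [h.supp x (by omega), zero_mul])
      _ < ∑ x ∈ Finset.range n, b * b' :=
          Finset.sum_lt_sum_of_nonempty ⟨0, Finset.mem_range.2 hn⟩ fun x _ => hz x
      _ = n * (b * b') := by simp
  · rw [coeff_mul]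
    refine Finset.sum_eq_zero fun x hx => ?_
    rw [Finset.HasAntidiagonal.mem_antidiagonal] at hx
    by_cases hxn : n ≤ x.1
    · rw [h.supp _ hxn, zero_mul]
    · rw [h'.supp _ (by omega), mul_zero]

theorem shl (h : Enc b n N p) (k : ℕ) : Enc b (n + k) (N <<< (128 * k)) (p * X ^ k) := by
  refine ⟨?_, fun i => ?_, fun i hi => ?_⟩
  · rw [eval_mul, h.eval, eval_pow, eval_X, Nat.shiftLeft_eq, pow_mul]
  · rw [coeff_mul_X_pow']
    split_ifs
    · exact h.lt _
    · exact (Nat.zero_le _).trans_lt (h.lt 0)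
  · rw [coeff_mul_X_pow', if_pos (by omega), h.supp _ (by omega)]

theorem const {c : ℕ} (hc : c < b) : Enc b 1 c (C c) := by
  refine ⟨by simp, fun i => ?_, fun i hi => ?_⟩
  · rw [coeff_C]; split_ifs <;> omega
  · rw [coeff_C, if_neg (by omega)]

theorem rep_ofFn (s l : ℕ) : Enc (s + 1) (2 ^ l) (rep s l) (ofFn (2 ^ l) fun _ => s) := by
  induction l with
  | zero =>
    have h : ofFn (2 ^ 0) (fun _ => s) = C s := by
      ext i; rw [ofFn_coeff, coeff_C]; simp
    rw [h]; exact const (Nat.lt_succ_self s)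
  | succ l ih =>
    have h : ofFn (2 ^ (l + 1)) (fun _ => s) =
        ofFn (2 ^ l) (fun _ => s) + ofFn (2 ^ l) (fun _ => s) * X ^ 2 ^ l := by
      ext i
      simp only [coeff_add, coeff_mul_X_pow', ofFn_coeff, pow_succ]
      split_ifs <;> omega
    refine ⟨?_, fun i => ?_, fun i hi => ?_⟩
    · rw [h, eval_add, ih.eval, (ih.shl (2 ^ l)).eval]; rfl
    · rw [ofFn_coeff]; split_ifs <;> omega
    · rw [ofFn_coeff, if_neg (by omega)]

theorem testBit_rep (e l i j : ℕ) (he : e ≤ 128) (hj : j < 128) :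
    (LeftFact.rep (2 ^ e - 1) l).testBit (128 * i + j) = (decide (i < 2 ^ l) && decide (j < e)) := by
  have he2 : 2 ^ e ≤ 2 ^ 128 := Nat.pow_le_pow_right (by norm_num) he
  have : 0 < 2 ^ e := by positivity
  rw [(rep_ofFn (2 ^ e - 1) l).testBit (by omega) i j hj, ofFn_coeff]
  split_ifs with h <;> simp [h]

/-- Every number becomes a packed polynomial with small coefficients after masking. -/
theorem land_rep (v e l : ℕ) (he : e ≤ 128) : ∃ q, Enc (2 ^ e) (2 ^ l)
    (v &&& LeftFact.rep (2 ^ e - 1) l) q := by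
  have he2 : 2 ^ e ≤ 2 ^ 128 := Nat.pow_le_pow_right (by norm_num) he
  have hc : ∀ i, (ofFn (2 ^ l) fun i => (v >>> (128 * i)) % 2 ^ e).coeff i < 2 ^ e := by
    intro i
    rw [ofFn_coeff]; split_ifs
    · exact Nat.mod_lt _ (by positivity)
    · positivity
  refine ⟨_, eval_eq_of_testBit (fun i => (hc i).trans_le he2) fun i j hj => ?_, hc, fun i hi => ?_⟩
  · rw [Nat.testBit_and, testBit_rep e l i j he hj, ofFn_coeff]
    split_ifs with h
    · simp [h, Nat.testBit_mod_two_pow, Nat.testBit_shiftRight, Bool.and_comm]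
    · simp [h]
  · rw [ofFn_coeff, if_neg (by omega)]

/-- Shifting right by `s` bits and masking acts digit by digit. -/
theorem shiftMask {e s l : ℕ} (h : Enc (2 ^ e) n N p) (he : e ≤ 128) (hs : e ≤ s + 56)
    (hs2 : s + 56 ≤ 128) (hn : n ≤ 2 ^ l) :
    Enc (2 ^ 56) n ((N >>> s) &&& mask l) (ofFn n fun i => p.coeff i >>> s) := by
  have he2 : 2 ^ e ≤ 2 ^ 128 := Nat.pow_le_pow_right (by norm_num) he
  have hc : ∀ i, (ofFn n fun i => p.coeff i >>> s).coeff i < 2 ^ 56 := by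
    intro i
    rw [ofFn_coeff]; split_ifs
    · rw [Nat.shiftRight_eq_div_pow]
      refine Nat.div_lt_of_lt_mul ((h.lt i).trans_le ?_)
      rw [← pow_add]; exact Nat.pow_le_pow_right (by norm_num) hs
    · positivity
  refine ⟨eval_eq_of_testBit (fun i => (hc i).trans_le (by norm_num)) fun i j hj => ?_, hc,
    fun i hi => ?_⟩
  · rw [Nat.testBit_and, show mask l = LeftFact.rep (2 ^ 56 - 1) l from rfl,
      testBit_rep 56 l i j (by norm_num) hj, Nat.testBit_shiftRight]
    by_cases hj2 : j < 56
    · rw [show s + (128 * i + j) = 128 * i + (s + j) by ring, h.testBit he2 i (s + j) (by omega),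
        ofFn_coeff]
      by_cases hi : i < n
      · simp [hi, hj2, hi.trans_le hn]
      · simp [hi, h.supp i (by omega)]
    · rw [Nat.testBit_lt_two_pow ((hc i).trans_le (Nat.pow_le_pow_right (by norm_num) (by omega)))]
      simp [hj2]
  · rw [ofFn_coeff, if_neg (by omega)]

theorem slice (h : Enc b n N p) (hb : b ≤ 2 ^ 128) (k m : ℕ) :
    Enc b m (slice k m N) (ofFn m fun i => p.coeff (k + i)) := by
  have hc : ∀ i, (ofFn m fun i => p.coeff (k + i)).coeff i < b := by
    intro i
    rw [ofFn_coeff]; split_ifs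
    · exact h.lt _
    · exact (Nat.zero_le _).trans_lt (h.lt 0)
  refine ⟨eval_eq_of_testBit (fun i => (hc i).trans_le hb) fun i j hj => ?_, hc, fun i hi => ?_⟩
  · have hs : LeftFact.slice k m N = (N &&& (1 <<< (128 * (k + m)) - 1)) >>> (128 * k) := rfl
    rw [hs, Nat.testBit_shiftRight, Nat.testBit_and, Nat.one_shiftLeft, Nat.testBit_two_pow_sub_one,
      show 128 * k + (128 * i + j) = 128 * (k + i) + j by ring, h.testBit hb _ j hj, ofFn_coeff]
    by_cases hi : i < m
    · rw [if_pos hi, decide_eq_true (by omega), Bool.and_true]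
    · rw [if_neg hi, decide_eq_false (by omega)]; simp
  · rw [ofFn_coeff, if_neg (by omega)]

/-- The constant is `⌊2 ^ 90 / P⌋`. -/
theorem barrett (c : ℕ) (hc : c < 2 ^ 87) :
    P * ((180570104372208234 * (c >>> 31)) >>> 59) ≤ c ∧
      c - P * ((180570104372208234 * (c >>> 31)) >>> 59) < 2 ^ 34 := by
  simp only [Nat.shiftRight_eq_div_pow]
  norm_num at hc ⊢
  omega

/-- `red` reduces all the coefficients modulo `P`. -/
theorem red {l : ℕ} (h : Enc (2 ^ 87) n N p) (hn : n ≤ 2 ^ l) :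
    ∃ p' q, Enc (2 ^ 34) n (red (mask l) N) p' ∧ p = p' + C P * q := by
  set q0 := ofFn n fun i => p.coeff i >>> 31 with hq0
  have h0 : Enc (2 ^ 56) n ((N >>> 31) &&& mask l) q0 :=
    h.shiftMask (by norm_num) (by norm_num) (by norm_num) hn
  have h1 : Enc (2 ^ 114) n (180570104372208234 * ((N >>> 31) &&& mask l))
      (C 180570104372208234 * q0) :=
    ((const (b := 2 ^ 58) (by norm_num)).mul one_pos h0).mono (by norm_num) (by omega)
  have h2 := h1.shiftMask (s := 59) (l := l) (by norm_num) (by norm_num) (by norm_num) hn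
  set q := ofFn n fun i => (C 180570104372208234 * q0).coeff i >>> 59 with hq
  have hqc : ∀ i, q.coeff i = (180570104372208234 * (p.coeff i >>> 31)) >>> 59 := by
    intro i
    rw [hq, ofFn_coeff, coeff_C_mul, hq0, ofFn_coeff]
    split_ifs with hi
    · rfl
    · simp [h.supp i (by omega)]
  set p' := ofFn n fun i => p.coeff i - P * q.coeff i with hp'
  have hpc : ∀ i, p'.coeff i = p.coeff i - P * q.coeff i := by
    intro i
    rw [hp', ofFn_coeff]
    split_ifs with hi
    · rfl
    · rw [h.supp i (by omega), Nat.zero_sub]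
  have hpq : p = p' + C P * q := by
    ext i
    rw [coeff_add, coeff_C_mul, hpc, hqc, Nat.sub_add_cancel (barrett _ (h.lt i)).1]
  refine ⟨p', q, ⟨?_, fun i => ?_, fun i hi => ?_⟩, hpq⟩
  · have h3 := h.eval
    have h4 : LeftFact.red (mask l) N =
      N - P * ((180570104372208234 * ((N >>> 31) &&& mask l)) >>> 59 &&& mask l) := rfl
    rw [h4, ← h2.eval, ← h3]
    conv_rhs => rw [hpq]
    rw [eval_add, eval_mul, eval_C, Nat.add_sub_cancel]
  · rw [hpc, hqc]; exact (barrett _ (h.lt i)).2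
  · rw [hpc, h.supp i hi, Nat.zero_sub]

end Enc

/-! ### Packed polynomials over a field of characteristic `P` -/

section Field

variable {F : Type*} [Field F]

/-- `N` is a packed form of some polynomial over `ℕ`, with at most `n` coefficients, all of them
below `b`, whose image over `F` is `f`. -/
def Packs (b n N : ℕ) (f : F[X]) : Prop :=
  ∃ p, Enc b n N p ∧ p.map (Nat.castRingHom F) = f

theorem map_ofFn (n : ℕ) (c : ℕ → ℕ) :
    (ofFn n c).map (Nat.castRingHom F) = ofFn n fun i => (c i : F) := by
  ext i
  rw [coeff_map, ofFn_coeff, ofFn_coeff]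
  split_ifs <;> simp

namespace Packs

variable {b n N b' n' N' : ℕ} {f g : F[X]}

theorem mono (h : Packs b n N f) (hb : b ≤ b') (hn : n ≤ n') : Packs b' n' N f := by
  obtain ⟨p, hp, rfl⟩ := h
  exact ⟨p, hp.mono hb hn, rfl⟩

theorem add (h : Packs b n N f) (h' : Packs b' n' N' g) :
    Packs (b + b') (max n n') (N + N') (f + g) := by
  obtain ⟨p, hp, rfl⟩ := h
  obtain ⟨q, hq, rfl⟩ := h'
  exact ⟨p + q, hp.add hq, Polynomial.map_add _⟩

theorem mul (h : Packs b n N f) (h' : Packs b' n' N' g) (hn : 0 < n) :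
    Packs (n * (b * b')) (n + n' - 1) (N * N') (f * g) := by
  obtain ⟨p, hp, rfl⟩ := h
  obtain ⟨q, hq, rfl⟩ := h'
  exact ⟨p * q, hp.mul hn hq, Polynomial.map_mul _⟩

theorem shl (h : Packs b n N f) (k : ℕ) : Packs b (n + k) (N <<< (128 * k)) (f * X ^ k) := by
  obtain ⟨p, hp, rfl⟩ := h
  exact ⟨_, hp.shl k, by simp⟩

theorem const {c : ℕ} (hc : c < b) : Packs b 1 c (C (c : F)) :=
  ⟨_, Enc.const hc, by simp⟩

theorem slice (h : Packs b n N f) (hb : b ≤ 2 ^ 128) (k m : ℕ) :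
    Packs b m (slice k m N) (ofFn m fun i => f.coeff (k + i)) := by
  obtain ⟨p, hp, rfl⟩ := h
  refine ⟨_, hp.slice hb k m, ?_⟩
  rw [map_ofFn]
  simp

theorem natDegree_le (h : Packs b (n + 1) N f) : f.natDegree ≤ n := by
  obtain ⟨p, hp, rfl⟩ := h
  rw [natDegree_le_iff_coeff_eq_zero]
  intro i hi
  rw [coeff_map, hp.supp i hi, map_zero]

theorem cast_eq (h : Packs b 1 N f) : (N : F) = f.coeff 0 := by
  obtain ⟨p, hp, rfl⟩ := h
  have : p = C (p.coeff 0) := by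
    ext i
    rw [coeff_C]
    split_ifs with hi
    · rw [hi]
    · exact hp.supp i (by omega)
  rw [coeff_map, ← hp.eval]
  conv_lhs => rw [this, eval_C]
  rfl

variable [CharP F P]

theorem red {l : ℕ} (h : Packs b n N f) (hb : b ≤ 2 ^ 87) (hn : n ≤ 2 ^ l) :
    Packs (2 ^ 34) n (red (mask l) N) f := by
  obtain ⟨p, hp, rfl⟩ := h
  obtain ⟨p', q, h1, h2⟩ := (hp.mono hb le_rfl).red hn
  refine ⟨p', h1, ?_⟩
  have h0 : (Nat.castRingHom F) P = 0 := CharP.cast_eq_zero F P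
  rw [h2, Polynomial.map_add, Polynomial.map_mul, map_C, h0, C_0, zero_mul, add_zero]

end Packs

theorem cast_mod_P [CharP F P] (x : ℕ) : ((x % P : ℕ) : F) = x := by
  conv_rhs => rw [← Nat.mod_add_div x P, Nat.cast_add, Nat.cast_mul, CharP.cast_eq_zero F P,
    zero_mul, add_zero]

/-- The packed form of `1 + c * X`. -/
theorem packs_linear [CharP F P] (c : ℕ) :
    Packs (2 ^ 34) 2 (1 + (c % P) <<< 128) (1 + C (c : F) * X) := by
  have h1 : Packs (2 ^ 33) 1 1 (1 : F[X]) := by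
    have := Packs.const (F := F) (b := 2 ^ 33) (c := 1) (by norm_num)
    rwa [Nat.cast_one, C_1] at this
  have h2 : Packs (2 ^ 33) 1 (c % P) (C (c : F)) := by
    rw [← cast_mod_P]
    exact Packs.const ((Nat.mod_lt _ (by norm_num)).trans (by norm_num))
  have h3 := h1.add (h2.shl 1)
  rw [pow_one] at h3
  exact h3

/-! ### The subproduct trees -/

/-- `h` and `g` are, up to reversal with respect to degree `n`, the polynomials
`∏_{t < n} (x + b + t + 1)` and `∑_{k < n} ∏_{t < k} (x + b + t + 1)`. -/
structure IsHG (n b : ℕ) (h g : F[X]) : Prop where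
  deg_h : h.natDegree ≤ n
  deg_g : g.natDegree ≤ n
  eval_h : ∀ a : F, (h.reflect n).eval a = ∏ t ∈ Finset.range n, (a + ((b + t + 1 : ℕ) : F))
  eval_g : ∀ a : F, (g.reflect n).eval a =
    ∑ k ∈ Finset.range n, ∏ t ∈ Finset.range k, (a + ((b + t + 1 : ℕ) : F))

/-- Two adjacent blocks combine: `H = H₁ * H₂` and `G = G₁ + H₁ * G₂`, where `G₁` picks up a factor
`X ^ n` on reversal. -/
theorem IsHG.double {n b : ℕ} {h g h' g' : F[X]} (H : IsHG n b h g) (H' : IsHG n (b + n) h' g') :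
    IsHG (n + n) b (h * h') (g * X ^ n + h * g') := by
  have hX : (X ^ n : F[X]).natDegree ≤ n := natDegree_X_pow_le n
  refine ⟨natDegree_mul_le_of_le H.deg_h H'.deg_h, natDegree_add_le_of_degree_le
    (natDegree_mul_le_of_le H.deg_g hX) (natDegree_mul_le_of_le H.deg_h H'.deg_g),
    fun a => ?_, fun a => ?_⟩
  · rw [reflect_mul _ _ H.deg_h H'.deg_h, eval_mul, H.eval_h, H'.eval_h, Finset.prod_range_add]
    congr 1
    refine Finset.prod_congr rfl fun t _ => ?_
    congr 2
    ring
  · rw [reflect_add, reflect_mul _ _ H.deg_g hX, reflect_mul _ _ H.deg_h H'.deg_g, eval_add,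
      eval_mul, eval_mul, H.eval_g, H.eval_h, H'.eval_g, Finset.sum_range_add, Finset.mul_sum]
    have : (reflect n (X ^ n : F[X])).eval a = 1 := by
      rw [reflect_monomial, revAt_le le_rfl]
      simp
    rw [this, mul_one]
    congr 1
    refine Finset.sum_congr rfl fun k _ => ?_
    rw [Finset.prod_range_add]
    congr 1
    refine Finset.prod_congr rfl fun t _ => ?_
    congr 2
    ring

theorem prodH_spec [CharP F P] (l : ℕ) : ∀ i, l ≤ 17 → ∃ h g : F[X],
    Packs (2 ^ 34) (2 ^ l + 1) (prodH l i).1 h ∧ Packs (2 ^ 34) (2 ^ l + 1) (prodH l i).2 g ∧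
      IsHG (2 ^ l) (i * 2 ^ l) h g := by
  induction l with
  | zero =>
    intro i _
    have hX : Packs (2 ^ 34) 2 (1 <<< 128) (X : F[X]) := by
      have := (Packs.const (F := F) (b := 2 ^ 34) (c := 1) (by norm_num)).shl 1
      simpa using this
    refine ⟨1 + C ((i + 1 : ℕ) : F) * X, X, packs_linear (i + 1), hX,
      (packs_linear (i + 1)).natDegree_le, hX.natDegree_le, fun a => ?_, fun a => ?_⟩
    · have h1 : reflect 1 (1 + C ((i + 1 : ℕ) : F) * X) = X + C ((i + 1 : ℕ) : F) := by
        rw [reflect_add, reflect_C_mul, ← C_1, reflect_C, reflect_one_X]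
        simp
      rw [pow_zero, h1]
      simp
    · rw [pow_zero, reflect_one_X]
      simp
  | succ l ih =>
    intro i hl
    obtain ⟨h, g, hh, hg, H⟩ := ih (2 * i) (by omega)
    obtain ⟨h', g', hh', hg', H'⟩ := ih (2 * i + 1) (by omega)
    have hl2 : 2 ^ l ≤ 2 ^ 16 := Nat.pow_le_pow_right (by norm_num) (by omega)
    have hl3 : 0 < 2 ^ l := by positivity
    have e1 : 2 ^ (l + 1) = 2 ^ l + 2 ^ l := by ring
    have e2 : 2 ^ (l + 2) = 4 * 2 ^ l := by ring
    refine ⟨h * h', g * X ^ 2 ^ l + h * g', ?_, ?_, ?_⟩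
    · have := ((hh.mul hh' (by omega)).mono (b' := 2 ^ 87) (n' := 2 ^ (l + 1) + 1)
        (by omega) (by omega)).red (l := l + 2) le_rfl (by omega)
      exact this
    · have := (((hg.shl (2 ^ l)).add (hh.mul hg' (by omega))).mono (b' := 2 ^ 87)
        (n' := 2 ^ (l + 1) + 1) (by omega) (by omega)).red (l := l + 2) le_rfl (by omega)
      exact this
    · rw [e1]
      convert H.double (h' := h') (g' := g') ?_ using 1
      · ring
      · convert H' using 1
        ring

/-- The polynomial `∏_{j < n} (1 - d * (b + j) * X)`. -/
noncomputable def den (F : Type*) [Field F] (d n b : ℕ) : F[X] :=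
  ∏ j ∈ Finset.range n, (1 - C ((d * (b + j) : ℕ) : F) * X)

theorem den_double (d l i : ℕ) : den F d (2 ^ (l + 1)) (i * 2 ^ (l + 1)) =
    den F d (2 ^ l) (2 * i * 2 ^ l) * den F d (2 ^ l) ((2 * i + 1) * 2 ^ l) := by
  rw [den, den, den, show 2 ^ (l + 1) = 2 ^ l + 2 ^ l by ring, Finset.prod_range_add]
  congr 1
  · rw [show i * (2 ^ l + 2 ^ l) = 2 * i * 2 ^ l by ring]
  · refine Finset.prod_congr rfl fun t _ => ?_
    rw [show i * (2 ^ l + 2 ^ l) + (2 ^ l + t) = (2 * i + 1) * 2 ^ l + t by ring]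

theorem prodQ_spec [CharP F P] (d l : ℕ) : ∀ i, l ≤ 17 →
    Packs (2 ^ 34) (2 ^ l + 1) (prodQ d l i).q (den F d (2 ^ l) (i * 2 ^ l)) := by
  induction l with
  | zero =>
    intro i _
    have h := packs_linear (F := F) (6855730872 * (d * i))
    have e : den F d (2 ^ 0) (i * 2 ^ 0) = 1 + C ((6855730872 * (d * i) : ℕ) : F) * X := by
      have h0 : ((6855730872 : ℕ) : F) = -1 := by
        have := CharP.cast_eq_zero F P
        rw [show P = 6855730872 + 1 from rfl, Nat.cast_add, Nat.cast_one] at this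
        exact eq_neg_of_add_eq_zero_left this
      rw [Nat.cast_mul, h0, den]
      simp [sub_eq_add_neg]
    rw [e]
    exact h
  | succ l ih =>
    intro i hl
    have h := ih (2 * i) (by omega)
    have h' := ih (2 * i + 1) (by omega)
    have hl2 : 2 ^ l ≤ 2 ^ 16 := Nat.pow_le_pow_right (by norm_num) (by omega)
    have hl3 : 0 < 2 ^ l := by positivity
    have e1 : 2 ^ (l + 1) = 2 ^ l + 2 ^ l := by ring
    have e2 : 2 ^ (l + 2) = 4 * 2 ^ l := by ring
    have := ((h.mul h' (by omega)).mono (b' := 2 ^ 87) (n' := 2 ^ (l + 1) + 1)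
        (by omega) (by omega)).red (l := l + 2) le_rfl (by omega)
    rw [den_double]
    exact this

/-! ### Descending the tree -/

/-- The coefficients `o, …, o + n - 1` of a power series, as a polynomial. -/
noncomputable def window (o n : ℕ) (S : PowerSeries F) : F[X] :=
  ofFn n fun i => PowerSeries.coeff (o + i) S

theorem window_coeff (o n i : ℕ) (S : PowerSeries F) :
    (window o n S).coeff i = if i < n then PowerSeries.coeff (o + i) S else 0 :=
  ofFn_coeff _ _ _

/-- The upper half of the product of a window of length `2 * m` with a polynomial of degree at most
`m` is a window of the product with the power series: no coefficient outside the window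
contributes. -/
theorem coeff_window_mul {o m i : ℕ} {S : PowerSeries F} {f : F[X]} (hf : f.natDegree ≤ m)
    (hi : i < m) : (f * window o (2 * m) S).coeff (m + i) =
      PowerSeries.coeff (o + m + i) (S * (f : PowerSeries F)) := by
  rw [mul_comm S, coeff_mul, PowerSeries.coeff_mul,
    Finset.Nat.sum_antidiagonal_eq_sum_range_succ
      (fun x y => f.coeff x * (window o (2 * m) S).coeff y),
    Finset.Nat.sum_antidiagonal_eq_sum_range_succ
      (fun x y => PowerSeries.coeff x (f : PowerSeries F) * PowerSeries.coeff y S)]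
  have h0 : ∀ x, x ∉ Finset.range (m + 1) → f.coeff x = 0 := fun x hx =>
    coeff_eq_zero_of_natDegree_lt (by rw [Finset.mem_range] at hx; omega)
  rw [← Finset.sum_subset (s₁ := Finset.range (m + 1)) (s₂ := Finset.range (m + i).succ),
    ← Finset.sum_subset (s₁ := Finset.range (m + 1)) (s₂ := Finset.range (o + m + i).succ)]
  · refine Finset.sum_congr rfl fun x hx => ?_
    rw [Finset.mem_range] at hx
    rw [window_coeff, if_pos (by omega), coeff_coe,
      show o + (m + i - x) = o + m + i - x by omega]
  · exact Finset.range_subset_range.2 (by omega)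
  · intro x _ hx
    rw [coeff_coe, h0 x hx, zero_mul]
  · exact Finset.range_subset_range.2 (by omega)
  · intro x _ hx
    rw [h0 x hx, zero_mul]

theorem packs_win [CharP F P] {o l T q : ℕ} {S : PowerSeries F} {f : F[X]} (hl : l ≤ 17)
    (hT : Packs (2 ^ 34) (2 ^ (l + 1)) T (window o (2 ^ (l + 1)) S))
    (hq : Packs (2 ^ 34) (2 ^ l + 1) q f) :
    Packs (2 ^ 34) (2 ^ l) (win l T q) (window (o + 2 ^ l) (2 ^ l) (S * (f : PowerSeries F))) := by
  have hl2 : 2 ^ l ≤ 2 ^ 17 := Nat.pow_le_pow_right (by norm_num) hl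
  have h := (((hq.mul hT (Nat.succ_pos _)).mono (b' := 2 ^ 87) (by omega) le_rfl).slice
    (by norm_num) (2 ^ l) (2 ^ l)).red (l := l) le_rfl le_rfl
  have e : (ofFn (2 ^ l) fun i => (f * window o (2 ^ (l + 1)) S).coeff (2 ^ l + i)) =
      window (o + 2 ^ l) (2 ^ l) (S * (f : PowerSeries F)) := by
    ext i
    rw [ofFn_coeff, window_coeff]
    split_ifs with hi
    · rw [pow_succ', coeff_window_mul hq.natDegree_le hi]
    · rfl
  rw [e, mul_comm] at h
  exact h

/-- Dividing by `1 - a * X` evaluates the reversed polynomial at `a`. -/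
theorem coeff_of_mul_linear {S : PowerSeries F} {f : F[X]} {a : F} {d : ℕ}
    (h : S * ((1 - C a * X : F[X]) : PowerSeries F) = f) (hf : f.natDegree ≤ d) :
    PowerSeries.coeff d S = (f.reflect d).eval a := by
  have h1 : ∀ n, PowerSeries.coeff n S = ∑ k ∈ Finset.range (n + 1), f.coeff k * a ^ (n - k) := by
    have h' : S = (f : PowerSeries F) + PowerSeries.C a * (S * PowerSeries.X) := by
      rw [← h]
      push_cast
      ring
    intro n
    induction n with
    | zero =>
      rw [h']
      simp
    | succ n ih =>
      rw [h', map_add, PowerSeries.coeff_C_mul, PowerSeries.coeff_succ_mul_X, ih, coeff_coe,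
        Finset.sum_range_succ _ (n + 1), Finset.mul_sum, add_comm, Nat.sub_self, pow_zero, mul_one]
      congr 1
      refine Finset.sum_congr rfl fun k hk => ?_
      rw [Finset.mem_range] at hk
      rw [show n + 1 - k = n - k + 1 by omega, pow_succ]
      ring
  have h2 : (f.reflect d).natDegree < d + 1 := by
    rw [Nat.lt_succ_iff, natDegree_le_iff_coeff_eq_zero]
    intro i hi
    rw [coeff_reflect, revAt_eq_self_of_lt hi]
    exact coeff_eq_zero_of_natDegree_lt (by omega)
  rw [h1, eval_eq_sum_range' h2, ← Finset.sum_range_reflect]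
  refine Finset.sum_congr rfl fun k hk => ?_
  rw [Finset.mem_range] at hk
  rw [coeff_reflect, revAt_le (by omega), show d + 1 - 1 - k = d - k by omega,
    show d - (d - k) = k by omega]

/-- The state `st` holds `n!` and `∑_{k < n} k!` modulo `P`. -/
def IsState (F : Type*) [Field F] (n st : ℕ) : Prop :=
  ((st &&& 18446744073709551615 : ℕ) : F) = (Nat.factorial n : F) ∧
    ((st >>> 64 : ℕ) : F) = ∑ k ∈ Finset.range n, (Nat.factorial k : F)

theorem factorial_add_eq (n k : ℕ) : (Nat.factorial (n + k) : F) =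
    Nat.factorial n * ∏ t ∈ Finset.range k, ((n : F) + ((0 + t + 1 : ℕ) : F)) := by
  induction k with
  | zero => simp
  | succ k ih =>
    rw [Finset.prod_range_succ, ← mul_assoc, ← ih, ← add_assoc, Nat.factorial_succ]
    push_cast
    ring

theorem isState_step [CharP F P] {n d h g st : ℕ} {fh fg : F[X]} (H : IsHG d 0 fh fg)
    (hst : IsState F n st) (hh : (h : F) = (fh.reflect d).eval (n : F))
    (hg : (g : F) = (fg.reflect d).eval (n : F)) : IsState F (n + d) (step h g st) := by
  obtain ⟨h1, h2⟩ := hst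
  have e : step h g st = ((st &&& 18446744073709551615) * h) % P +
    (((st >>> 64) + (st &&& 18446744073709551615) * g) % P) <<< 64 := rfl
  have hlt : ((st &&& 18446744073709551615) * h) % P < P := Nat.mod_lt _ (by norm_num)
  have a1 : ∀ x y : ℕ, x < P → (x + y <<< 64) &&& 18446744073709551615 = x := by
    intro x y hx
    rw [show 18446744073709551615 = 2 ^ 64 - 1 by norm_num, Nat.and_two_pow_sub_one_eq_mod,
      Nat.shiftLeft_eq]
    norm_num at hx ⊢
    omega
  have a2 : ∀ x y : ℕ, x < P → (x + y <<< 64) >>> 64 = y := by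
    intro x y hx
    rw [Nat.shiftRight_eq_div_pow, Nat.shiftLeft_eq]
    norm_num at hx ⊢
    omega
  constructor
  · rw [e, a1 _ _ hlt, cast_mod_P, Nat.cast_mul, h1, hh, H.eval_h, factorial_add_eq]
  · rw [e, a2 _ _ hlt, cast_mod_P, Nat.cast_add, Nat.cast_mul, h1, h2, hg, H.eval_g,
      Finset.sum_range_add, Finset.mul_sum]
    exact congrArg₂ (· + ·) rfl (Finset.sum_congr rfl fun k _ => (factorial_add_eq n k).symm)

theorem force_eq {α : Type} (n : ℕ) (k : ℕ → α) : force n k = k n := by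
  cases n <;> rfl

/-- `Sh` and `Sg` are the quotients of `fh` and `fg` by the polynomial at the current node, and `h`
and `g` hold their coefficients of degrees `d + 1 - 2 ^ l, …, d`. The descent advances the state over
all the blocks below the node. -/
theorem eval_spec [CharP F P] {d : ℕ} {fh fg : F[X]} (H : IsHG d 0 fh fg) (l : ℕ) :
    ∀ (i o h g st : ℕ) (Sh Sg : PowerSeries F), l ≤ 17 → o + 2 ^ l = d + 1 →
      Sh * (den F d (2 ^ l) (i * 2 ^ l) : PowerSeries F) = fh →
      Sg * (den F d (2 ^ l) (i * 2 ^ l) : PowerSeries F) = fg →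
      Packs (2 ^ 34) (2 ^ l) h (window o (2 ^ l) Sh) →
      Packs (2 ^ 34) (2 ^ l) g (window o (2 ^ l) Sg) →
      IsState F (d * (i * 2 ^ l)) st →
      IsState F (d * ((i + 1) * 2 ^ l)) (eval l (prodQ d l i) h g st) := by
  induction l with
  | zero =>
    intro i o h g st Sh Sg _ ho hSh hSg hh hg hst
    obtain rfl : o = d := by simpa using ho
    have hden : den F o (2 ^ 0) (i * 2 ^ 0) = 1 - C ((o * (i * 2 ^ 0) : ℕ) : F) * X := by
      simp [den]
    rw [hden] at hSh hSg
    have e : o * ((i + 1) * 2 ^ 0) = o * (i * 2 ^ 0) + o := by ring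
    have e' : ∀ t, eval 0 t h g st = step h g st := fun _ => rfl
    rw [e, e']
    refine isState_step H hst ?_ ?_
    · rw [← coeff_of_mul_linear hSh H.deg_h, hh.cast_eq, window_coeff]
      simp
    · rw [← coeff_of_mul_linear hSg H.deg_g, hg.cast_eq, window_coeff]
      simp
  | succ l ih =>
    intro i o h g st Sh Sg hl ho hSh hSg hh hg hst
    have hl' : l ≤ 17 := by omega
    have q1 := prodQ_spec (F := F) d l (2 * i) hl'
    have q2 := prodQ_spec (F := F) d l (2 * i + 1) hl'
    have ho' : o + 2 ^ l + 2 ^ l = d + 1 := by rw [← ho]; ring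
    rw [den_double, coe_mul] at hSh hSg
    have e : eval (l + 1) (prodQ d (l + 1) i) h g st =
        force (eval l (prodQ d l (2 * i)) (win l h (prodQ d l (2 * i + 1)).q)
          (win l g (prodQ d l (2 * i + 1)).q) st) fun st =>
            eval l (prodQ d l (2 * i + 1)) (win l h (prodQ d l (2 * i)).q)
              (win l g (prodQ d l (2 * i)).q) st := rfl
    rw [e, force_eq]
    have s1 := ih (2 * i) (o + 2 ^ l) _ _ st _ _ hl' ho'
      (by rw [mul_assoc, mul_comm (den F d (2 ^ l) ((2 * i + 1) * 2 ^ l) : PowerSeries F), hSh])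
      (by rw [mul_assoc, mul_comm (den F d (2 ^ l) ((2 * i + 1) * 2 ^ l) : PowerSeries F), hSg])
      (packs_win hl' hh q2) (packs_win hl' hg q2)
      (by rw [show d * (2 * i * 2 ^ l) = d * (i * 2 ^ (l + 1)) by ring]; exact hst)
    have s2 := ih (2 * i + 1) (o + 2 ^ l) _ _ _ _ _ hl' ho'
      (by rw [mul_assoc, hSh]) (by rw [mul_assoc, hSg])
      (packs_win hl' hh q1) (packs_win hl' hg q1) s1
    rw [show d * ((i + 1) * 2 ^ (l + 1)) = d * ((2 * i + 1 + 1) * 2 ^ l) by ring]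
    exact s2

/-! ### Correctness of the computation -/

theorem isInv_spec [CharP F P] {q v l n n' : ℕ} {fq fv : F[X]} (hq : Packs (2 ^ 34) n q fq)
    (hv : Packs (2 ^ 34) n' v fv) (hn0 : 0 < n) (hn : n ≤ 2 ^ 18) (h : isInv q v l = true) :
    ∀ i ≤ 2 ^ l, (fq * fv).coeff i = (1 : F[X]).coeff i := by
  have hpos : 0 < 2 ^ l := by positivity
  have hle : 2 ^ l + 1 ≤ 2 ^ (l + 1) := by rw [pow_succ]; omega
  obtain ⟨p, hp, hpm⟩ := (((hq.mul hv hn0).mono (b' := 2 ^ 87) (by omega) le_rfl).slice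
    (by norm_num) 0 (2 ^ l + 1)).red (l := l + 1) le_rfl hle
  set r := red (mask (l + 1)) (slice 0 (2 ^ l + 1) (q * v)) with hr
  have hr1 : r = 1 + P * (r >>> 32 &&& mask (l + 1)) := by
    have h' : Nat.beq r (1 + P * (r >>> 32 &&& mask (l + 1))) = true := h
    exact Nat.eq_of_beq_eq_true h'
  have h1 := hp.shiftMask (s := 32) (l := l + 1) (by norm_num) (by norm_num) (by norm_num) hle
  set t := ofFn (2 ^ l + 1) fun i => p.coeff i >>> 32
  have h2 := (Enc.const (b := 2) (c := 1) (by norm_num)).add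
    ((Enc.const (b := P + 1) (c := P) (by norm_num)).mul one_pos h1)
  rw [← hr1] at h2
  have h3 : p = C 1 + C P * t := hp.ext h2 (by norm_num) (by norm_num)
  have h0 : (Nat.castRingHom F) P = 0 := CharP.cast_eq_zero F P
  intro i hi
  have h4 : (1 : F[X]) = ofFn (2 ^ l + 1) fun i => (fq * fv).coeff (0 + i) := by
    rw [← hpm, h3, Polynomial.map_add, Polynomial.map_mul, map_C, map_C, h0]
    simp
  rw [h4, ofFn_coeff, if_pos (by omega), zero_add]

theorem packs_top [CharP F P] {a b f v n : ℕ} {ff fv : F[X]} {U : PowerSeries F} (hb : b ≤ a)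
    (ha : a ≤ 17) (hf : Packs (2 ^ 34) (2 ^ a + 1) f ff) (hv : Packs (2 ^ 34) n v fv)
    (hU : ∀ i ≤ 2 ^ a, (ff * fv).coeff i = PowerSeries.coeff i U) :
    Packs (2 ^ 34) (2 ^ b) (top a b f v) (window (2 ^ a - 2 ^ b + 1) (2 ^ b) U) := by
  have hl2 : 2 ^ a ≤ 2 ^ 17 := Nat.pow_le_pow_right (by norm_num) ha
  have hab : 2 ^ b ≤ 2 ^ a := Nat.pow_le_pow_right (by norm_num) hb
  have h := (((hf.mul hv (Nat.succ_pos _)).mono (b' := 2 ^ 87) (by omega) le_rfl).slice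
    (by norm_num) (2 ^ a - 2 ^ b + 1) (2 ^ b)).red (l := b) le_rfl le_rfl
  have e : (ofFn (2 ^ b) fun i => (ff * fv).coeff (2 ^ a - 2 ^ b + 1 + i)) =
      window (2 ^ a - 2 ^ b + 1) (2 ^ b) U := by
    ext i
    rw [window_coeff, ofFn_coeff]
    split_ifs with hi
    · exact hU _ (by omega)
    · rfl
  rw [e] at h
  exact h

/-- If `v` is an inverse of `q` up to degree `d`, then `f * v` agrees with `f / q` up to
degree `d`. -/
theorem coeff_mul_approx_inv {f q v : F[X]} {d : ℕ}
    (h : ∀ i ≤ d, (q * v).coeff i = (1 : F[X]).coeff i)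
    (h0 : PowerSeries.constantCoeff (q : PowerSeries F) ≠ 0) :
    ∀ i ≤ d, (f * v).coeff i =
      PowerSeries.coeff i ((f : PowerSeries F) * (q : PowerSeries F)⁻¹) := by
  intro i hi
  have h1 : (PowerSeries.X : PowerSeries F) ^ (d + 1) ∣ (q : PowerSeries F) * v - 1 := by
    rw [PowerSeries.X_pow_dvd_iff]
    intro m hm
    rw [← coe_mul, ← coe_one, map_sub, coeff_coe, coeff_coe, h m (by omega), sub_self]
  have h2 : (f : PowerSeries F) * v - f * (q : PowerSeries F)⁻¹ =
      f * (q : PowerSeries F)⁻¹ * (q * v - 1) := by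
    have := PowerSeries.inv_mul_cancel _ h0
    linear_combination (-(f : PowerSeries F) * v) * this
  have h3 : (PowerSeries.X : PowerSeries F) ^ (d + 1) ∣
      (f : PowerSeries F) * v - f * (q : PowerSeries F)⁻¹ := h2 ▸ h1.mul_left _
  have h4 := PowerSeries.X_pow_dvd_iff.1 h3 i (by omega)
  rw [map_sub, sub_eq_zero, ← coe_mul, coeff_coe] at h4
  exact h4

theorem main_spec [CharP F P] {a b : ℕ} (hb : b ≤ a) (ha : a ≤ 17) (h : main a b = true) :
    ∑ k ∈ Finset.range (2 ^ a * 2 ^ b), (Nat.factorial k : F) = 2 := by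
  obtain ⟨fh, fg, hh, hg, H⟩ := prodH_spec (F := F) a 0 ha
  rw [zero_mul] at H
  have hQ := prodQ_spec (F := F) (2 ^ a) b 0 (by omega)
  obtain ⟨pv, hpv⟩ := Enc.land_rep (inv (prodQ (2 ^ a) b 0).q a) 34 (a + 1) (by norm_num)
  set v := inv (prodQ (2 ^ a) b 0).q a &&& rep (2 ^ 34 - 1) (a + 1) with hvdef
  have hv : Packs (2 ^ 34) (2 ^ (a + 1)) v (pv.map (Nat.castRingHom F)) := ⟨_, hpv, rfl⟩
  have hmain : (isInv (prodQ (2 ^ a) b 0).q v a &&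
      Nat.beq ((eval b (prodQ (2 ^ a) b 0) (top a b (prodH a 0).1 v) (top a b (prodH a 0).2 v) 1)
        >>> 64) 2) = true := h
  rw [Bool.and_eq_true] at hmain
  obtain ⟨hinv, hres⟩ := hmain
  have hres := Nat.eq_of_beq_eq_true hres
  have hb2 : 2 ^ b ≤ 2 ^ 17 := Nat.pow_le_pow_right (by norm_num) (by omega)
  have hab : 2 ^ b ≤ 2 ^ a := Nat.pow_le_pow_right (by norm_num) hb
  have hone := isInv_spec hQ hv (Nat.succ_pos _) (by omega) hinv
  set fq := den F (2 ^ a) (2 ^ b) (0 * 2 ^ b) with hfq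
  set fv := pv.map (Nat.castRingHom F)
  have h0 : PowerSeries.constantCoeff (fq : PowerSeries F) ≠ 0 := by
    have := hone 0 (Nat.zero_le _)
    rw [mul_coeff_zero, coeff_one_zero] at this
    rw [← PowerSeries.coeff_zero_eq_constantCoeff_apply, coeff_coe]
    exact left_ne_zero_of_mul_eq_one this
  have hcancel : ∀ f : F[X], (f : PowerSeries F) * (fq : PowerSeries F)⁻¹ * fq = f := fun f => by
    rw [mul_assoc, PowerSeries.inv_mul_cancel _ h0, mul_one]
  have hst : IsState F (2 ^ a * (0 * 2 ^ b)) 1 := by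
    constructor <;> simp
  have hfin := eval_spec H b 0 (2 ^ a - 2 ^ b + 1) _ _ 1 _ _ (by omega) (by omega)
    (hcancel fh) (hcancel fg)
    (packs_top hb ha hh hv (coeff_mul_approx_inv hone h0))
    (packs_top hb ha hg hv (coeff_mul_approx_inv hone h0)) hst
  have h2 := hfin.2
  rw [hres] at h2
  rw [show 2 ^ a * 2 ^ b = 2 ^ a * ((0 + 1) * 2 ^ b) by ring, ← h2]
  norm_num

end Field

/-! ### Conclusion -/

theorem main_run : main 17 16 = true := by
  decide +kernel

/-- Modulo `p`, the terms `k!` with `k ≥ p` vanish. -/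
theorem sum_factorial_eq (p N : ℕ) (hp : 0 < p) (h : p ≤ N) :
    ∑ k ∈ Finset.range N, (Nat.factorial k : ZMod p) = (leftFactorial p : ℕ) := by
  rw [leftFactorial, Nat.cast_sum]
  refine (Finset.sum_subset (Finset.range_subset_range.2 h) fun k _ hk => ?_).symm
  rw [Finset.mem_range, not_lt] at hk
  rw [ZMod.natCast_eq_zero_iff]
  exact Nat.dvd_factorial hp hk

theorem leftFactorial_eq (p : ℕ) (h : 2 ≤ p) :
    leftFactorial p = ∑ i ∈ Finset.Icc 2 (p - 1), Nat.factorial i + 2 := by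
  obtain ⟨n, rfl⟩ := Nat.exists_eq_add_of_le h
  have e : Finset.Icc 2 (2 + n - 1) = Finset.Ico 2 (2 + n) := by
    ext x
    simp only [Finset.mem_Icc, Finset.mem_Ico]
    omega
  rw [leftFactorial, e, Finset.sum_Ico_eq_sum_range, Finset.sum_range_add, add_comm,
    Nat.add_sub_cancel_left]
  rfl

theorem residue (p N : ℕ) (hp : 2 ≤ p) (hN : p ≤ N)
    (h : ∑ k ∈ Finset.range N, (Nat.factorial k : ZMod p) = 2) :
    (p ∣ ∑ i ∈ Finset.Icc 2 (p - 1), Nat.factorial i) ∧ leftFactorial p ≡ 2 [MOD p] := by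
  have h1 : leftFactorial p ≡ 2 [MOD p] := by
    rw [← ZMod.natCast_eq_natCast_iff, ← sum_factorial_eq p N (by omega) hN, h]
    rfl
  refine ⟨?_, h1⟩
  rw [leftFactorial_eq p hp] at h1
  exact Nat.modEq_zero_iff_dvd.1 (Nat.ModEq.add_right_cancel' 2 (by rwa [zero_add]))

theorem prime_P : Nat.Prime P := by
  change Nat.Prime 6855730873
  have ne_one : ∀ c : ℕ, c % 6855730873 ≠ 1 → ((c : ℕ) : ZMod 6855730873) ≠ 1 := by
    intro c hc h
    rw [← Nat.cast_one, ZMod.natCast_eq_natCast_iff'] at h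
    exact hc h
  refine lucas_primality _ (5 : ZMod 6855730873) ?_ ?_
  · rw [show 6855730873 - 1 = 6855730872 by norm_num]
    reduce_mod_char
  · intro q hq hd
    have hd' : q ∣ 2 ^ 3 * 3 * 349 * 491 * 1667 := hd
    have h349 : Nat.Prime 349 := by norm_num
    have h491 : Nat.Prime 491 := by norm_num
    have h1667 : Nat.Prime 1667 := by norm_num
    have hq' : q = 2 ∨ q = 3 ∨ q = 349 ∨ q = 491 ∨ q = 1667 := by
      simp only [hq.dvd_mul, hq.prime.dvd_pow_iff_dvd (n := 3) (by norm_num),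
        Nat.prime_dvd_prime_iff_eq hq Nat.prime_two, Nat.prime_dvd_prime_iff_eq hq Nat.prime_three,
        Nat.prime_dvd_prime_iff_eq hq h349, Nat.prime_dvd_prime_iff_eq hq h491,
        Nat.prime_dvd_prime_iff_eq hq h1667] at hd'
      simpa only [or_assoc] using hd'
    rcases hq' with rfl | rfl | rfl | rfl | rfl
    · rw [show (6855730873 - 1) / 2 = 3427865436 by norm_num]
      reduce_mod_char
      exact_mod_cast ne_one _ (by norm_num)
    · rw [show (6855730873 - 1) / 3 = 2285243624 by norm_num]
      reduce_mod_char
      exact_mod_cast ne_one _ (by norm_num)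
    · rw [show (6855730873 - 1) / 349 = 19643928 by norm_num]
      reduce_mod_char
      exact_mod_cast ne_one _ (by norm_num)
    · rw [show (6855730873 - 1) / 491 = 13962792 by norm_num]
      reduce_mod_char
      exact_mod_cast ne_one _ (by norm_num)
    · rw [show (6855730873 - 1) / 1667 = 4112616 by norm_num]
      reduce_mod_char
      exact_mod_cast ne_one _ (by norm_num)

end LeftFact

/-- `p = 6855730873` is prime and `p` divides `2! + 3! + ⋯ + (p-1)!`;
equivalently, `!p ≡ 2 (mod p)`. -/
theorem residue_two_example :
    Nat.Prime 6855730873 ∧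
      (6855730873 ∣ ∑ i ∈ Finset.Icc 2 (6855730873 - 1), Nat.factorial i) ∧
      leftFactorial 6855730873 ≡ 2 [MOD 6855730873] := by
  have : Fact (Nat.Prime LeftFact.P) := ⟨LeftFact.prime_P⟩
  refine ⟨LeftFact.prime_P, ?_⟩
  -- the sum may run up to `2 ^ 33`, which exceeds `p`
  exact LeftFact.residue LeftFact.P (2 ^ 17 * 2 ^ 16) (by norm_num) (by norm_num)
    (LeftFact.main_spec (by norm_num) le_rfl LeftFact.main_run)
end

section
/- The number p = 9632267 is prime and p divides !^5 p = (0!)^5 + (1!)^5 + ⋯ + ((p-1)!)^5. -/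
namespace Brown

/-! ### Horner form of the left factorial -/

/-- `1 + (lo+1)^5 * (1 + (lo+2)^5 * (⋯ (1 + (lo+n)^5 * x)))`. -/
def hor : ℕ → ℕ → ℕ → ℕ
  | _, 0, x => x
  | lo, n + 1, x => 1 + (lo + 1) ^ 5 * hor (lo + 1) n x

/-- `(lo + 1) * (lo + 2) * ⋯ * (lo + n)`. -/
def prd : ℕ → ℕ → ℕ
  | _, 0 => 1
  | lo, n + 1 => (lo + 1) * prd (lo + 1) n

theorem hor_add (lo m n x : ℕ) : hor lo (m + n) x = hor lo m (hor (lo + m) n x) := by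
  induction m generalizing lo with
  | zero => simp [hor]
  | succ m ih =>
    rw [show m + 1 + n = (m + n) + 1 by ring, hor, hor, ih, show lo + 1 + m = lo + (m + 1) by ring]

theorem hor_affine (lo n x : ℕ) : hor lo n x = hor lo n 0 + prd lo n ^ 5 * x := by
  induction n generalizing lo with
  | zero => simp [hor, prd]
  | succ n ih => rw [hor, hor, prd, ih]; ring

theorem modEq_of_eq {p x y : ℕ} (h : x = y) : x ≡ y [MOD p] := h ▸ rfl

theorem hor_modEq {p x y : ℕ} (lo n : ℕ) (h : x ≡ y [MOD p]) :
    hor lo n x ≡ hor lo n y [MOD p] := by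
  rw [hor_affine lo n x, hor_affine lo n y]
  exact (h.mul_left _).add_left _

theorem factorial_mul_hor (lo n x : ℕ) :
    lo.factorial ^ 5 * hor lo n x
      = ∑ i ∈ Finset.range n, (lo + i).factorial ^ 5 + (lo + n).factorial ^ 5 * x := by
  induction n generalizing lo with
  | zero => simp [hor]
  | succ n ih =>
    have h := ih (lo + 1)
    rw [Nat.factorial_succ, mul_pow] at h
    rw [hor, Finset.sum_range_succ']
    have e : ∀ i, lo + (i + 1) = lo + 1 + i := fun i => by ring
    rw [Finset.sum_congr rfl fun i _ => congrArg (fun j => Nat.factorial j ^ 5) (e i), e n, add_zero,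
      add_right_comm, ← h]
    ring

theorem genLeftFactorial_eq_hor (n : ℕ) : genLeftFactorial 5 n = hor 0 n 0 := by
  have h := factorial_mul_hor 0 n 0
  simp at h
  rw [h, genLeftFactorial]

/-! ### The packed computation -/

noncomputable section

/-- The `2 ^ k` values `g s, g (s + 1), …` packed into 52-bit lanes, by binary splitting. -/
def tree (g : ℕ → ℕ) (k : ℕ) : ℕ → ℕ :=
  Nat.rec (fun s => g s)
    (fun k ih s => Nat.add (ih s)
      (Nat.mul (Nat.pow 2 (Nat.mul 52 (Nat.pow 2 k))) (ih (Nat.add s (Nat.pow 2 k))))) k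

/-- `f n`, written so that kernel reduction evaluates `n` to a literal before entering `f`. -/
def force (n : ℕ) (f : ℕ → ℕ) : ℕ := Nat.rec (f 0) (fun n' _ => f (Nat.succ n')) n

/-- Apply `step t, step (t + 1), …, step (t + 2 ^ k - 1)` in this order. Binary splitting together
with `force` keeps the reduction depth proportional to `k`. -/
def iter (step : ℕ → ℕ → ℕ) (k : ℕ) : ℕ → ℕ → ℕ :=
  Nat.rec (fun t s => step t s)
    (fun k ih t s => force (ih t s) (fun s' => ih (Nat.add t (Nat.pow 2 k)) s')) k

/-- The mask selecting the lanes `r < 512` whose index has binary digit `b` equal to `1`;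
the constant is `2 ^ 52 - 1`. -/
def bitMask (b : ℕ) : ℕ :=
  tree (fun r => Nat.mul (Nat.mod (Nat.div r (Nat.pow 2 b)) 2) 4503599627370495) 9 0

/-- The packed vector with all 512 lanes equal to `c`. -/
def const (c : ℕ) : ℕ := tree (fun _ => c) 9 0

/-- `2 ^ b` times the lanes of `F` whose index has binary digit `b` equal to `1`. -/
def sel (b F : ℕ) : ℕ := Nat.mul (Nat.pow 2 b) (Nat.land F (bitMask b))

/-- Multiply each lane by its index, one binary digit of the index at a time. -/
def idxMul (F : ℕ) : ℕ :=
  Nat.add (sel 0 F) (Nat.add (sel 1 F) (Nat.add (sel 2 F) (Nat.add (sel 3 F) (Nat.add (sel 4 F)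
    (Nat.add (sel 5 F) (Nat.add (sel 6 F) (Nat.add (sel 7 F) (sel 8 F))))))))

/-- Shift each lane right by `k` bits. -/
def shr (k F : ℕ) : ℕ :=
  Nat.shiftRight (Nat.sub F (Nat.land F (const (Nat.sub (Nat.pow 2 k) 1)))) k

/-- Lanewise partial reduction modulo `p` in the style of Barrett: `58444180 = ⌊2 ^ 49 / p⌋`, so
the subtracted multiple of `p` uses the approximation `⌊⌊v / 2 ^ 23⌋ * 58444180 / 2 ^ 26⌋` of
`v / p`. -/
def red (F : ℕ) : ℕ :=
  Nat.sub F (Nat.mul 9632267 (shr 26 (Nat.mul 58444180 (shr 23 F))))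

/-- Multiply lane `r` by `c + 1024 * r` and reduce. -/
def mulRed (c F : ℕ) : ℕ := red (Nat.add (Nat.mul c F) (Nat.mul 1024 (idxMul F)))

/-- One step of the computation of the products `prd`, in all lanes at once. -/
def stepP (a t F : ℕ) : ℕ := mulRed (Nat.sub (Nat.add a 1024) t) F

/-- One step of the computation of the Horner sums `hor`, in all lanes at once. -/
def stepS (a t F : ℕ) : ℕ :=
  (fun c => Nat.add (const 1) (mulRed c (mulRed c (mulRed c (mulRed c (mulRed c F))))))
    (Nat.sub (Nat.add a 1024) t)

/-- The content of lane `r`. -/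
def lane (F r : ℕ) : ℕ := Nat.mod (Nat.shiftRight F (Nat.mul 52 r)) 4503599627370496

/-- One step of the composition of the 512 affine maps whose linear and constant parts are read
off the lanes of `P` and `S`, starting from the last lane. -/
def stepX (P S j x : ℕ) : ℕ :=
  Nat.mod (Nat.add (lane S (Nat.sub 511 j)) (Nat.mul (Nat.pow (lane P (Nat.sub 511 j)) 5) x))
    9632267

/-- The value of `hor a (2 ^ 19) x` modulo `p`, computed in 512 lanes of 1024 steps each. -/
def chunk (a x : ℕ) : ℕ :=
  force (iter (stepP a) 10 0 (const 1)) fun P =>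
    force (iter (stepS a) 10 0 0) fun S => iter (stepX P S) 9 0 x

end

/-! ### Correctness of the packed computation -/

/-- The number whose 52-bit lanes are `f 0, …, f (n - 1)` (provided these are below `2 ^ 52`). -/
def pk (n : ℕ) (f : ℕ → ℕ) : ℕ := ∑ r ∈ Finset.range n, f r * 2 ^ (52 * r)

theorem pk_succ (n : ℕ) (f : ℕ → ℕ) :
    pk (n + 1) f = 2 ^ 52 * pk n (fun r => f (r + 1)) + f 0 := by
  rw [pk, Finset.sum_range_succ', pk, Finset.mul_sum, mul_zero, pow_zero, mul_one]
  refine congrArg (· + f 0) (Finset.sum_congr rfl fun r _ => ?_)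
  rw [mul_add, pow_add]; ring

theorem pk_congr {n : ℕ} {f g : ℕ → ℕ} (h : ∀ r < n, f r = g r) : pk n f = pk n g :=
  Finset.sum_congr rfl fun r hr => by rw [h r (Finset.mem_range.1 hr)]

theorem pk_add (n : ℕ) (f g : ℕ → ℕ) : pk n f + pk n g = pk n fun r => f r + g r := by
  simp only [pk, add_mul, Finset.sum_add_distrib]

theorem mul_pk (n c : ℕ) (f : ℕ → ℕ) : c * pk n f = pk n fun r => c * f r := by
  simp only [pk, Finset.mul_sum, mul_assoc]

theorem pk_sub {n : ℕ} {f g : ℕ → ℕ} (h : ∀ r < n, g r ≤ f r) :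
    pk n f - pk n g = pk n fun r => f r - g r := by
  rw [Nat.sub_eq_iff_eq_add, pk_add]
  · exact pk_congr fun r hr => (Nat.sub_add_cancel (h r hr)).symm
  · exact Finset.sum_le_sum fun r hr => Nat.mul_le_mul_right _ (h r (Finset.mem_range.1 hr))

theorem land_split {a c : ℕ} (b d : ℕ) (ha : a < 2 ^ 52) (hc : c < 2 ^ 52) :
    (2 ^ 52 * b + a) &&& (2 ^ 52 * d + c) = 2 ^ 52 * (b &&& d) + (a &&& c) := by
  have hac : a &&& c < 2 ^ 52 := lt_of_le_of_lt Nat.and_le_left ha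
  refine Nat.eq_of_testBit_eq fun i => ?_
  rw [Nat.testBit_and, Nat.testBit_two_pow_mul_add _ ha, Nat.testBit_two_pow_mul_add _ hc,
    Nat.testBit_two_pow_mul_add _ hac]
  split_ifs <;> simp

theorem land_pk {n : ℕ} {f g : ℕ → ℕ} (hf : ∀ r < n, f r < 2 ^ 52) (hg : ∀ r < n, g r < 2 ^ 52) :
    pk n f &&& pk n g = pk n fun r => f r &&& g r := by
  induction n generalizing f g with
  | zero => simp [pk]
  | succ n ih =>
    rw [pk_succ, pk_succ, pk_succ, land_split _ _ (hf 0 (by omega)) (hg 0 (by omega)),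
      ih (fun r hr => hf _ (by omega)) (fun r hr => hg _ (by omega))]

theorem lane_pk {n : ℕ} {f : ℕ → ℕ} (hf : ∀ r < n, f r < 2 ^ 52) {r : ℕ} (hr : r < n) :
    lane (pk n f) r = f r := by
  change (pk n f >>> (52 * r)) % 4503599627370496 = f r
  induction r generalizing n f with
  | zero =>
    obtain ⟨n, rfl⟩ : ∃ m, n = m + 1 := ⟨n - 1, by omega⟩
    rw [pk_succ]
    have := hf 0 hr
    simp only [mul_zero, Nat.shiftRight_zero]
    omega
  | succ r ih =>
    obtain ⟨n, rfl⟩ : ∃ m, n = m + 1 := ⟨n - 1, by omega⟩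
    have h0 := hf 0 (by omega)
    have h := ih (n := n) (f := fun r => f (r + 1)) (fun r hr => hf _ (by omega)) (by omega)
    rw [pk_succ, show 52 * (r + 1) = 52 + 52 * r by ring, Nat.shiftRight_add]
    rw [show (2 ^ 52 * pk n (fun r => f (r + 1)) + f 0) >>> 52 = pk n fun r => f (r + 1) by
      rw [Nat.shiftRight_eq_div_pow]; omega]
    exact h

theorem tree_eq (g : ℕ → ℕ) (k s : ℕ) : tree g k s = pk (2 ^ k) fun r => g (s + r) := by
  induction k generalizing s with
  | zero => simp [tree, pk]
  | succ k ih =>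
    change tree g k s + 2 ^ (52 * 2 ^ k) * tree g k (s + 2 ^ k) = _
    rw [ih, ih, pk, pk, pk, pow_succ, mul_two, Finset.sum_range_add, Finset.mul_sum]
    congr 1
    refine Finset.sum_congr rfl fun r _ => ?_
    rw [mul_add, pow_add, add_assoc]; ring

theorem const_eq (c : ℕ) : const c = pk 512 fun _ => c := tree_eq _ 9 0

theorem bitMask_eq (b : ℕ) : bitMask b = pk 512 fun r => r / 2 ^ b % 2 * (2 ^ 52 - 1) := by
  refine (tree_eq _ 9 0).trans (pk_congr fun r _ => ?_)
  rw [zero_add]; rfl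

theorem sel_pk {f : ℕ → ℕ} (hf : ∀ r < 512, f r < 2 ^ 52) (b : ℕ) :
    sel b (pk 512 f) = pk 512 fun r => 2 ^ b * (r / 2 ^ b % 2) * f r := by
  change 2 ^ b * (pk 512 f &&& bitMask b) = _
  have hbit : ∀ r, r / 2 ^ b % 2 = 0 ∨ r / 2 ^ b % 2 = 1 := fun r => Nat.mod_two_eq_zero_or_one _
  rw [bitMask_eq, land_pk hf, mul_pk]
  · refine pk_congr fun r hr => ?_
    rcases hbit r with h | h <;> rw [h]
    · simp
    · rw [one_mul, Nat.and_two_pow_sub_one_eq_mod, Nat.mod_eq_of_lt (hf r hr), mul_one]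
  · intro r _
    rcases hbit r with h | h <;> rw [h] <;> norm_num

theorem idxMul_pk {f : ℕ → ℕ} (hf : ∀ r < 512, f r < 2 ^ 52) :
    idxMul (pk 512 f) = pk 512 fun r => r * f r := by
  change sel 0 _ + (sel 1 _ + (sel 2 _ + (sel 3 _ + (sel 4 _ + (sel 5 _ + (sel 6 _ +
    (sel 7 _ + sel 8 _))))))) = _
  simp only [sel_pk hf, pk_add]
  refine pk_congr fun r hr => ?_
  simp only [← add_mul]
  congr 1
  norm_num only
  omega

theorem shr_pk {f : ℕ → ℕ} (hf : ∀ r < 512, f r < 2 ^ 52) {k : ℕ} (hk : k ≤ 52) :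
    shr k (pk 512 f) = pk 512 fun r => f r / 2 ^ k := by
  change (pk 512 f - (pk 512 f &&& const (2 ^ k - 1))) >>> k = _
  have hk' : (2 : ℕ) ^ k ≤ 2 ^ 52 := Nat.pow_le_pow_right (by norm_num) hk
  have hpos : 0 < (2 : ℕ) ^ k := by positivity
  rw [const_eq, land_pk hf (fun _ _ => by omega)]
  simp only [Nat.and_two_pow_sub_one_eq_mod]
  rw [pk_sub fun r _ => Nat.mod_le _ _, Nat.shiftRight_eq_div_pow]
  apply Nat.div_eq_of_eq_mul_right hpos
  rw [mul_pk]
  refine pk_congr fun r _ => ?_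
  have := Nat.div_add_mod (f r) (2 ^ k)
  omega

/-- The remainder left by `red` in a lane with content `v`. -/
def barrett (v : ℕ) : ℕ := v - 9632267 * (58444180 * (v / 2 ^ 23) / 2 ^ 26)

theorem barrett_le (v : ℕ) : 9632267 * (58444180 * (v / 2 ^ 23) / 2 ^ 26) ≤ v := by
  omega

theorem barrett_lt {v : ℕ} (hv : v < 2 ^ 49) : barrett v + 1 < 2 ^ 25 := by
  unfold barrett
  omega

theorem barrett_modEq (v : ℕ) : barrett v ≡ v [MOD 9632267] := by
  have h := Nat.sub_add_cancel (barrett_le v)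
  change barrett v + _ = v at h
  conv_rhs => rw [← h]
  simp [Nat.ModEq]

theorem red_pk {f : ℕ → ℕ} (hf : ∀ r < 512, f r < 2 ^ 49) :
    red (pk 512 f) = pk 512 fun r => barrett (f r) := by
  change pk 512 f - 9632267 * shr 26 (58444180 * shr 23 (pk 512 f)) = _
  rw [shr_pk (fun r hr => (hf r hr).trans (by norm_num)) (by norm_num), mul_pk,
    shr_pk (fun r hr => ?_) (by norm_num), mul_pk, pk_sub fun r _ => barrett_le _]
  · rfl
  · have := hf r hr
    omega

/-- `F` packs 512 lanes below `2 ^ 25 - b` which are congruent modulo `p` to the values of `g`. -/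
def Rep (b F : ℕ) (g : ℕ → ℕ) : Prop :=
  ∃ f : ℕ → ℕ, F = pk 512 f ∧ ∀ r < 512, f r + b < 2 ^ 25 ∧ f r ≡ g r [MOD 9632267]

theorem Rep.mono {b F : ℕ} {g : ℕ → ℕ} (h : Rep b F g) : Rep 0 F g := by
  obtain ⟨f, hF, hf⟩ := h
  exact ⟨f, hF, fun r hr => ⟨by have := (hf r hr).1; omega, (hf r hr).2⟩⟩

theorem Rep.congr {b F : ℕ} {g g' : ℕ → ℕ} (h : Rep b F g) (hg : ∀ r < 512, g r = g' r) :
    Rep b F g' := by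
  obtain ⟨f, hF, hf⟩ := h
  exact ⟨f, hF, fun r hr => hg r hr ▸ hf r hr⟩

theorem Rep.mulRed {F c : ℕ} {g : ℕ → ℕ} (h : Rep 0 F g) (hc : c + 1024 * 511 < 2 ^ 24) :
    Rep 1 (mulRed c F) fun r => (c + 1024 * r) * g r := by
  obtain ⟨f, hF, hf⟩ := h
  rw [hF]
  refine ⟨fun r => barrett ((c + 1024 * r) * f r), ?_, ?_⟩
  · change red (c * pk 512 f + 1024 * idxMul (pk 512 f)) = _
    rw [idxMul_pk (f := f) fun r hr => (hf r hr).1.trans (by norm_num), mul_pk, mul_pk, pk_add,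
      ← red_pk]
    · exact congrArg red (pk_congr fun r _ => by ring)
    · intro r hr
      exact lane_bound hc hr (hf r hr).1
  · intro r hr
    exact ⟨barrett_lt (lane_bound hc hr (hf r hr).1),
      (barrett_modEq _).trans ((hf r hr).2.mul_left _)⟩
where
  lane_bound {c r v : ℕ} (hc : c + 1024 * 511 < 2 ^ 24) (hr : r < 512) (hv : v + 0 < 2 ^ 25) :
      (c + 1024 * r) * v < 2 ^ 49 := by
    calc (c + 1024 * r) * v < 2 ^ 24 * 2 ^ 25 :=
          Nat.mul_lt_mul'' (by omega) (by omega)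
      _ = 2 ^ 49 := by norm_num

theorem force_eq (n : ℕ) (f : ℕ → ℕ) : force n f = f n := by
  cases n <;> rfl

theorem iter_induct {step : ℕ → ℕ → ℕ} {Q : ℕ → ℕ → Prop} {N : ℕ}
    (hstep : ∀ t s, t < N → Q t s → Q (t + 1) (step t s)) (k : ℕ) :
    ∀ t s, t + 2 ^ k ≤ N → Q t s → Q (t + 2 ^ k) (iter step k t s) := by
  induction k with
  | zero => exact fun t s ht h => hstep t s (by omega) h
  | succ k ih =>
    intro t s ht h
    change Q _ (force (iter step k t s) fun s' => iter step k (t + 2 ^ k) s')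
    rw [force_eq, pow_succ, mul_two, ← add_assoc]
    rw [pow_succ] at ht
    exact ih _ _ (by omega) (ih _ _ (by omega) h)

theorem rep_const_one : Rep 0 (const 1) fun _ => 1 :=
  ⟨fun _ => 1, const_eq 1, fun _ _ => ⟨by norm_num, rfl⟩⟩

theorem rep_zero : Rep 0 0 fun _ => 0 :=
  ⟨fun _ => 0, by simp [pk], fun _ _ => ⟨by norm_num, rfl⟩⟩

/-- The lanes work downwards: before step `t`, lane `r` has treated the last `t` of the indices
`a + 1024 * r + 1, …, a + 1024 * r + 1024`. -/
theorem rep_products {a : ℕ} (ha : a + 1024 * 512 < 2 ^ 24) :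
    Rep 0 (iter (stepP a) 10 0 (const 1)) fun r => prd (a + 1024 * r) 1024 := by
  have h := iter_induct (step := stepP a) (N := 1024)
    (Q := fun t F => Rep 0 F fun r => prd (a + 1024 * r + 1024 - t) t) ?_ 10 0 (const 1)
    (by norm_num) (rep_const_one.congr fun r _ => rfl)
  · exact h.congr fun r _ => by norm_num
  · intro t F ht hF
    refine (hF.mulRed (c := a + 1024 - t) (by omega)).mono.congr fun r _ => ?_
    rw [prd, show a + 1024 * r + 1024 - (t + 1) + 1 = a + 1024 * r + 1024 - t by omega,
      show a + 1024 - t + 1024 * r = a + 1024 * r + 1024 - t by omega]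

theorem rep_sums {a : ℕ} (ha : a + 1024 * 512 < 2 ^ 24) :
    Rep 0 (iter (stepS a) 10 0 0) fun r => hor (a + 1024 * r) 1024 0 := by
  have h := iter_induct (step := stepS a) (N := 1024)
    (Q := fun t F => Rep 0 F fun r => hor (a + 1024 * r + 1024 - t) t 0) ?_ 10 0 0
    (by norm_num) (rep_zero.congr fun r _ => rfl)
  · exact h.congr fun r _ => by norm_num
  · intro t F ht hF
    have hc : (a + 1024 - t) + 1024 * 511 < 2 ^ 24 := by omega
    obtain ⟨f, hf, hfr⟩ :=
      ((((hF.mulRed hc).mono.mulRed hc).mono.mulRed hc).mono.mulRed hc).mono.mulRed hc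
    refine ⟨fun r => 1 + f r, ?_, fun r hr => ⟨?_, ?_⟩⟩
    · rw [← pk_add, ← const_eq, ← hf]; rfl
    · have := (hfr r hr).1
      change 1 + f r + 0 < 2 ^ 25
      omega
    · refine ((hfr r hr).2.add_left 1).trans (modEq_of_eq ?_)
      beta_reduce
      rw [hor, show a + 1024 * r + 1024 - (t + 1) + 1 = a + 1024 * r + 1024 - t by omega,
        show a + 1024 - t + 1024 * r = a + 1024 * r + 1024 - t by omega]
      ring

theorem Rep.lane {F r : ℕ} {g : ℕ → ℕ} (h : Rep 0 F g) (hr : r < 512) :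
    lane F r ≡ g r [MOD 9632267] := by
  obtain ⟨f, hF, hf⟩ := h
  rw [hF]
  rw [lane_pk (f := f) (fun r hr => (hf r hr).1.trans (by norm_num)) hr]
  exact (hf r hr).2

theorem chunk_modEq {a : ℕ} (ha : a + 1024 * 512 < 2 ^ 24) (x : ℕ) :
    chunk a x ≡ hor a 524288 x [MOD 9632267] := by
  unfold chunk
  rw [force_eq, force_eq]
  have hP := rep_products ha
  have hS := rep_sums ha
  generalize iter (stepP a) 10 0 (const 1) = P at *
  generalize iter (stepS a) 10 0 0 = S at *
  have h := iter_induct (step := stepX P S) (N := 512)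
    (Q := fun j y => y ≡ hor (a + 1024 * (512 - j)) (1024 * j) x [MOD 9632267]) ?_ 9 0 x
    (by norm_num) rfl
  · exact h
  · intro j y hj hy
    have h1 := hP.lane (r := 511 - j) (by omega)
    have h2 := hS.lane (r := 511 - j) (by omega)
    change (lane S (511 - j) + lane P (511 - j) ^ 5 * y) % 9632267 ≡ _ [MOD _]
    refine (Nat.mod_modEq _ _).trans ((h2.add ((h1.pow 5).mul hy)).trans (modEq_of_eq ?_))
    rw [← hor_affine, show 1024 * (j + 1) = 1024 + 1024 * j by ring, hor_add,
      show 512 - (j + 1) = 511 - j by omega,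
      show a + 1024 * (511 - j) + 1024 = a + 1024 * (512 - j) by omega]

/-! ### Evaluation -/

/-- Each chunk starts from the value of the chunk above it. -/
theorem chunk_values :
    chunk 9437184 0 = 5774573 ∧
    chunk 8912896 5774573 = 6235465 ∧
    chunk 8388608 6235465 = 4218308 ∧
    chunk 7864320 4218308 = 5892348 ∧
    chunk 7340032 5892348 = 735286 ∧
    chunk 6815744 735286 = 8013 ∧
    chunk 6291456 8013 = 6596685 ∧
    chunk 5767168 6596685 = 8511489 ∧
    chunk 5242880 8511489 = 4779288 ∧
    chunk 4718592 4779288 = 3929585 ∧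
    chunk 4194304 3929585 = 4681451 ∧
    chunk 3670016 4681451 = 370425 ∧
    chunk 3145728 370425 = 3283042 ∧
    chunk 2621440 3283042 = 7124360 ∧
    chunk 2097152 7124360 = 1701795 ∧
    chunk 1572864 1701795 = 5965733 ∧
    chunk 1048576 5965733 = 2226348 ∧
    chunk 524288 2226348 = 2646540 ∧
    chunk 0 2646540 = 0 := by
  refine ⟨?_, ?_, ?_, ?_, ?_, ?_, ?_, ?_, ?_, ?_,
    ?_, ?_, ?_, ?_, ?_, ?_, ?_, ?_, ?_⟩ <;> decide +kernel

theorem hor_step {a b n x y : ℕ} (hab : b = a + 524288) (hb : b < 2 ^ 24)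
    (h : hor b n 0 ≡ x [MOD 9632267]) (hxy : chunk a x = y) :
    hor a (524288 + n) 0 ≡ y [MOD 9632267] := by
  subst hab
  rw [hor_add]
  exact (hor_modEq a 524288 h).trans (hxy ▸ (chunk_modEq (by omega) x).symm)

/-- Summing 19 chunks overshoots `p` terms; the surplus terms are handled by
`dvd_genLeftFactorial_of_le`. -/
theorem hor_total : hor 0 9961472 0 ≡ 0 [MOD 9632267] := by
  obtain ⟨h18, h17, h16, h15, h14, h13, h12, h11, h10, h9, h8, h7, h6, h5, h4, h3, h2, h1, h0⟩ :=
    chunk_values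
  have e : hor 9961472 0 0 ≡ 0 [MOD 9632267] := rfl
  have e := hor_step (by norm_num) (by norm_num) e h18
  have e := hor_step (by norm_num) (by norm_num) e h17
  have e := hor_step (by norm_num) (by norm_num) e h16
  have e := hor_step (by norm_num) (by norm_num) e h15
  have e := hor_step (by norm_num) (by norm_num) e h14
  have e := hor_step (by norm_num) (by norm_num) e h13
  have e := hor_step (by norm_num) (by norm_num) e h12
  have e := hor_step (by norm_num) (by norm_num) e h11
  have e := hor_step (by norm_num) (by norm_num) e h10
  have e := hor_step (by norm_num) (by norm_num) e h9
  have e := hor_step (by norm_num) (by norm_num) e h8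
  have e := hor_step (by norm_num) (by norm_num) e h7
  have e := hor_step (by norm_num) (by norm_num) e h6
  have e := hor_step (by norm_num) (by norm_num) e h5
  have e := hor_step (by norm_num) (by norm_num) e h4
  have e := hor_step (by norm_num) (by norm_num) e h3
  have e := hor_step (by norm_num) (by norm_num) e h2
  have e := hor_step (by norm_num) (by norm_num) e h1
  have e := hor_step (by norm_num) (by norm_num) e h0
  simpa only [Nat.reduceAdd] using e

/-- The terms `(i!)^5` with `i ≥ p` vanish modulo `p`. -/
theorem dvd_genLeftFactorial_of_le {p n : ℕ} (hp : 0 < p) (hn : p ≤ n)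
    (h : p ∣ genLeftFactorial 5 n) : p ∣ genLeftFactorial 5 p := by
  obtain ⟨d, rfl⟩ := Nat.exists_eq_add_of_le hn
  rw [genLeftFactorial, Finset.sum_range_add] at h
  refine (Nat.dvd_add_left (Finset.dvd_sum fun i _ => ?_)).1 h
  exact dvd_pow (Nat.dvd_factorial hp (Nat.le_add_right p i)) (by norm_num)

end Brown

/-- `p = 9632267` is prime and `p` divides `!^5 p`. -/
theorem brown_counterexample :
    Nat.Prime 9632267 ∧ 9632267 ∣ genLeftFactorial 5 9632267 := by
  refine ⟨by norm_num, Brown.dvd_genLeftFactorial_of_le (n := 9961472) (by norm_num)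
    (by norm_num) ?_⟩
  rw [Brown.genLeftFactorial_eq_hor]
  exact (Nat.modEq_zero_iff_dvd).1 Brown.hor_total
end
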